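/- Let M be an exponential family (Ĵ(θ;x^n) = J(θ) identically) satisfying Assumptions (A1)–(A6) with boundary exponent d > 0, let α > 1, λ ∈ (0, 1−α^{-1}], a > 0, and 0 < 2ι < d. Set REḠ = α( (K/2) log n + log ∫_Θ (det J(θ))^{1/2} dθ + f(n) + n^{−ι} ), with f(n) = C_n K a²/(8α) − K log a + r(n) as in the exponential-family regret bound. Then there exists a two-part code p'_twopart (combining the Fisher-information quantization code for θ̂ ∈ int Θ with the boundary code of (A6)) whose MDL estimator p̈ satisfies, for every p* ∈ M and all sufficiently large n: E_{X^n∼p*}[ d̄_λ(p* ‖ p̈_{X^n}) ] ≤ REḠ/n, and for every b > 0, Pr{ d̄_λ(p* ‖ p̈_{X^n}) > REḠ/n + b } < e^{−n b/α} under X^n ∼ p*. -/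

import Mathlib

open MeasureTheory Matrix

noncomputable section

/-- Euclidean norm on `Fin K → ℝ`. -/
def euclNorm {K : ℕ} (v : Fin K → ℝ) : ℝ := Real.sqrt (∑ i, (v i) ^ 2)

/-- Empirical Fisher information of a single observation:
`Ĵ_{ij}(θ;x) = −∂²(log p_θ(x))/∂θᵢ∂θⱼ`. -/
def Jhat1 {K : ℕ} {X : Type*} (p : (Fin K → ℝ) → X → ℝ) (θ : Fin K → ℝ) (x : X) :
    Matrix (Fin K) (Fin K) ℝ :=
  Matrix.of fun i j =>
    -(fderiv ℝ (fun θ' => fderiv ℝ (fun θ'' => Real.log (p θ'' x)) θ' (Pi.single j 1)) θ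
      (Pi.single i 1))

/-- Empirical Fisher information of a sample:
`Ĵ(θ;x^n) = (1/n) Σ_t Ĵ(θ;x_t)`. -/
def JhatN {K : ℕ} {X : Type*} (p : (Fin K → ℝ) → X → ℝ) {n : ℕ} (θ : Fin K → ℝ)
    (xn : Fin n → X) : Matrix (Fin K) (Fin K) ℝ :=
  (n : ℝ)⁻¹ • ∑ t, Jhat1 p θ (xn t)

/-- Fisher information `J(θ) = E_{p_θ}[Ĵ(θ;X)]`. -/
def FisherJ {K : ℕ} {X : Type*} [MeasurableSpace X] (μ : Measure X)
    (p : (Fin K → ℝ) → X → ℝ) (θ : Fin K → ℝ) : Matrix (Fin K) (Fin K) ℝ :=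
  Matrix.of fun i j => ∫ x, p θ x * Jhat1 p θ x i j ∂μ

/-- Rényi divergence of order `lam` between probability densities `p` and `q`. -/
def renyiDiv {X : Type*} [MeasurableSpace X] (μ : Measure X) (lam : ℝ) (p q : X → ℝ) : ℝ :=
  -(1 / (1 - lam)) * Real.log (∫ x, p x * (q x / p x) ^ (1 - lam) ∂μ)

/-!
Since the empirical information does not depend on the observation, log-likelihood differences are
affine along segments up to a deterministic function, so that almost everywhere the family is a
canonical exponential family. For a truth `p_s` and a codeword `q_θ`, a competing codeword near the
geometric mixture with parameter `s + (1 - λ)(θ - s)` has, by Chernoff's bound, a likelihood below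
that of `q_θ` with probability at most about `exp (-n ((1 - λ) / λ) d̄_λ(p_s ‖ q_θ))`. Hence
codewords of large divergence from the truth are not selected.

Truncating the densities to the set where the statistic is of moderate size, and splicing them with
a fixed density off that set, makes all log-likelihood ratios bounded. The competitor may then be
taken from a net of mesh `n ^ (-1/2)`, at the cost of a constant factor in the `n`-fold bound. The
net has `O(n ^ (K/2))` points, each coded with the same length; since `(1 - λ) / λ ≥ 1 / (α - 1)`
exceeds `1 / α`, the exponential bound leaves slack that absorbs the constants.
-/

theorem min_sq_one_le_exp_sub_one_sq (t : ℝ) : min (t ^ 2) 1 ≤ 4 * (Real.exp t - 1) ^ 2 := by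
  rcases le_total 0 t with ht | ht
  · have h := Real.add_one_le_exp t
    calc min (t ^ 2) 1 ≤ t ^ 2 := min_le_left _ _
      _ ≤ (Real.exp t - 1) ^ 2 := pow_le_pow_left₀ ht (by linarith) 2
      _ ≤ 4 * (Real.exp t - 1) ^ 2 := by linarith [sq_nonneg (Real.exp t - 1)]
  · have h1 : Real.exp t * Real.exp (-t) = 1 := by rw [← Real.exp_add]; simp
    have h2 : -t ≤ (1 - Real.exp t) * (1 - t) := by
      nlinarith [Real.add_one_le_exp (-t), Real.exp_pos t]
    have h3 : Real.exp t ≤ 1 := Real.exp_le_one_iff.mpr ht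
    rcases le_total (-1) t with ht1 | ht1
    · have h4 : -t ≤ 2 * (1 - Real.exp t) := by nlinarith
      exact (min_le_left _ _).trans (by nlinarith)
    · exact (min_le_right _ _).trans (by nlinarith)

theorem min_sub_sq_one_le (a b : ℝ) :
    min ((a - b) ^ 2) 1 ≤ 2 * min (a ^ 2) 1 + 2 * min (b ^ 2) 1 := by
  rcases le_total (a ^ 2) 1 with h1 | h1 <;> rcases le_total (b ^ 2) 1 with h2 | h2 <;>
    simp only [min_eq_left h1, min_eq_right h1, min_eq_left h2, min_eq_right h2]
  · exact (min_le_left _ _).trans (by nlinarith [sq_nonneg (a + b)])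
  · exact (min_le_right _ _).trans (by nlinarith [sq_nonneg a])
  · exact (min_le_right _ _).trans (by nlinarith [sq_nonneg b])
  · exact (min_le_right _ _).trans (by norm_num)

theorem exp_sub_one_le_mul_exp (x : ℝ) : Real.exp x - 1 ≤ x * Real.exp x := by
  have h : Real.exp (-x) * Real.exp x = 1 := by rw [← Real.exp_add]; simp
  nlinarith [Real.add_one_le_exp (-x), Real.exp_pos x]

theorem exp_le_one_add_add_sq_mul_exp {x b : ℝ} (h : |x| ≤ b) :
    Real.exp x ≤ 1 + x + x ^ 2 * Real.exp b := by
  have hx := exp_sub_one_le_mul_exp x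
  have hxb : Real.exp x ≤ Real.exp b := Real.exp_le_exp.mpr ((le_abs_self x).trans h)
  have hb : 1 ≤ Real.exp b := Real.one_le_exp ((abs_nonneg x).trans h)
  have h1 := Real.add_one_le_exp x
  rcases le_total 0 x with h0 | h0
  · nlinarith [sq_nonneg x, mul_le_mul_of_nonneg_left hx h0]
  · nlinarith [sq_nonneg x]

theorem exp_neg_mul_le_one_add_sq {r y b : ℝ} (hr : 0 ≤ r) (hy : |y| ≤ b) :
    Real.exp (-(r * y))
      ≤ 1 + r * (1 - Real.exp y) + (r * Real.exp b + r ^ 2 * Real.exp (r * b)) * y ^ 2 := by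
  have hry : |-(r * y)| ≤ r * b := by
    rw [abs_neg, abs_mul, abs_of_nonneg hr]
    exact mul_le_mul_of_nonneg_left hy hr
  have h1 := exp_le_one_add_add_sq_mul_exp hry
  have h2 := mul_le_mul_of_nonneg_left (exp_le_one_add_add_sq_mul_exp hy) hr
  linarith

theorem abs_exp_sub_one_le_mul_exp {x b : ℝ} (h : |x| ≤ b) : |Real.exp x - 1| ≤ b * Real.exp b := by
  have hb : 0 ≤ b := (abs_nonneg x).trans h
  have hx := abs_le.mp h
  refine abs_le.mpr ⟨by nlinarith [Real.add_one_le_exp x, Real.one_le_exp hb], ?_⟩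
  calc Real.exp x - 1 ≤ Real.exp b - 1 := by linarith [Real.exp_le_exp.mpr hx.2]
    _ ≤ b * Real.exp b := exp_sub_one_le_mul_exp b

theorem exp_second_difference_le {b C s φ₁ φ₂ : ℝ} (hb : 0 ≤ b) (hC : 0 ≤ C) (hs : 0 ≤ s)
    (hs1 : s ≤ 1) (h₁ : |φ₁| ≤ b * s) (h₂ : φ₂ - 2 * φ₁ ≤ C * s ^ 2) :
    Real.exp φ₂ - 2 * Real.exp φ₁ + 1
      ≤ (Real.exp (2 * b) * (C * Real.exp C) + (b * Real.exp b) ^ 2) * s ^ 2 := by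
  have hCs : C * s ^ 2 ≤ C := mul_le_of_le_one_right hC (pow_le_one₀ hs hs1)
  have hbs : b * s ≤ b := mul_le_of_le_one_right hb hs1
  have hcurv : Real.exp (φ₂ - 2 * φ₁) - 1 ≤ C * Real.exp C * s ^ 2 := by
    calc Real.exp (φ₂ - 2 * φ₁) - 1 ≤ Real.exp (C * s ^ 2) - 1 := by gcongr
      _ ≤ C * s ^ 2 * Real.exp (C * s ^ 2) := exp_sub_one_le_mul_exp _
      _ ≤ C * s ^ 2 * Real.exp C := by gcongr
      _ = C * Real.exp C * s ^ 2 := by ring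
  have hfirst : Real.exp (2 * φ₁) ≤ Real.exp (2 * b) := by
    gcongr
    exact (le_abs_self _).trans (h₁.trans hbs)
  have hsq : (Real.exp φ₁ - 1) ^ 2 ≤ (b * Real.exp b) ^ 2 * s ^ 2 := by
    have : |Real.exp φ₁ - 1| ≤ b * Real.exp b * s :=
      calc |Real.exp φ₁ - 1| ≤ b * s * Real.exp (b * s) := abs_exp_sub_one_le_mul_exp h₁
        _ ≤ b * s * Real.exp b := by gcongr
        _ = b * Real.exp b * s := by ring
    rw [← mul_pow, ← sq_abs]
    exact pow_le_pow_left₀ (abs_nonneg _) this 2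
  have hsplit : Real.exp φ₂ - 2 * Real.exp φ₁ + 1
      = Real.exp (2 * φ₁) * (Real.exp (φ₂ - 2 * φ₁) - 1) + (Real.exp φ₁ - 1) ^ 2 := by
    have hφ₁ : Real.exp (2 * φ₁) = Real.exp φ₁ ^ 2 := by rw [two_mul, Real.exp_add, sq]
    rw [mul_sub, ← Real.exp_add, add_sub_cancel, hφ₁]
    ring
  have hprod : Real.exp (2 * φ₁) * (Real.exp (φ₂ - 2 * φ₁) - 1)
      ≤ Real.exp (2 * b) * (C * Real.exp C * s ^ 2) :=
    (mul_le_mul_of_nonneg_left hcurv (Real.exp_pos _).le).trans (by gcongr)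
  rw [hsplit]
  linarith

theorem exists_finset_subset_span_coeff_le {V : Type*} [NormedAddCommGroup V] [NormedSpace ℝ V]
    [FiniteDimensional ℝ V] (S : Set V) :
    ∃ s : Finset V, ↑s ⊆ S ∧ ∃ C > 0, ∀ v ∈ Submodule.span ℝ S,
      ∃ c : s → ℝ, (∀ u, |c u| ≤ C * ‖v‖) ∧ v = ∑ u, c u • (u : V) := by
  obtain ⟨s, hsS, hspan⟩ :=
    (Submodule.fg_span_iff_fg_span_finset_subset S).mp (IsNoetherian.noetherian (R := ℝ) _)
  let L : (s → ℝ) →ₗ[ℝ] V := Fintype.linearCombination ℝ ((↑) : s → V)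
  have hrange : L.range = Submodule.span ℝ S := by
    rw [Fintype.range_linearCombination, Subtype.range_coe, hspan]
  obtain ⟨C, hC, hpre⟩ := ContinuousLinearMap.exists_preimage_norm_le
    (LinearMap.toContinuousLinearMap L.rangeRestrict) L.surjective_rangeRestrict
  refine ⟨s, hsS, C, hC, fun v hv => ?_⟩
  obtain ⟨c, hc, hcv⟩ := hpre ⟨v, hrange ▸ hv⟩
  refine ⟨c, fun u => (norm_le_pi_norm c u).trans hcv, ?_⟩
  exact ((congrArg Subtype.val hc).symm.trans (Fintype.linearCombination_apply ℝ _ c))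

theorem exists_finset_cover_card_le {ι : Type*} [Fintype ι] {Θ : Set (ι → ℝ)}
    (hΘ : Bornology.IsBounded Θ) :
    ∃ C > 0, ∀ s : ℝ, 1 ≤ s → ∃ N : Finset (ι → ℝ), ↑N ⊆ Θ ∧
      (N.card : ℝ) ≤ C * s ^ Fintype.card ι ∧ ∀ w ∈ Θ, ∃ z ∈ N, ‖z - w‖ ≤ 1 / s := by
  classical
  obtain ⟨D, hD, hΘD⟩ := hΘ.exists_pos_norm_le
  refine ⟨(2 * D + 2) ^ Fintype.card ι, by positivity, fun s hs => ?_⟩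
  have hs0 : 0 < s := by linarith
  let cell : (ι → ℝ) → ι → ℤ := fun θ i => ⌊θ i * s⌋
  let S : Finset (ι → ℤ) := Fintype.piFinset fun _ => Finset.Icc ⌊-(D * s)⌋ ⌊D * s⌋
  have hcell : Set.MapsTo cell Θ S := by
    intro θ hθ
    simp only [S, Finset.mem_coe, Fintype.mem_piFinset, Finset.mem_Icc]
    intro i
    have hi := abs_le.mp ((norm_le_pi_norm θ i).trans (hΘD θ hθ))
    exact ⟨Int.floor_le_floor (by nlinarith), Int.floor_le_floor (by nlinarith)⟩
  obtain ⟨N, hNΘ, hN⟩ := Set.exists_subset_bijOn Θ cell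
  have hfin : N.Finite := hN.finite_iff_finite.mpr (S.finite_toSet.subset hcell.image_subset)
  have hcard : hfin.toFinset.card ≤ S.card :=
    Finset.card_le_card_of_injOn cell (fun z hz => hcell (hNΘ (hfin.mem_toFinset.mp hz)))
      (by simpa using hN.injOn)
  refine ⟨hfin.toFinset, by simpa using hNΘ, ?_, fun w hw => ?_⟩
  · have hside : ((Finset.Icc ⌊-(D * s)⌋ ⌊D * s⌋).card : ℝ) ≤ (2 * D + 2) * s := by
      have hle : ⌊-(D * s)⌋ ≤ ⌊D * s⌋ + 1 :=
        (Int.floor_le_floor (by nlinarith)).trans (Int.le_add_one le_rfl)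
      rw [Int.card_Icc, ← Int.cast_natCast, Int.toNat_of_nonneg (by linarith)]
      push_cast
      linarith [Int.floor_le (D * s), Int.sub_one_lt_floor (-(D * s))]
    calc (hfin.toFinset.card : ℝ) ≤ S.card := by exact_mod_cast hcard
      _ = ((Finset.Icc ⌊-(D * s)⌋ ⌊D * s⌋).card : ℝ) ^ Fintype.card ι := by
        simp only [S, Fintype.card_piFinset, Finset.prod_const, Finset.card_univ, Nat.cast_pow]
      _ ≤ ((2 * D + 2) * s) ^ Fintype.card ι := by gcongr
      _ = _ := mul_pow _ _ _
  · obtain ⟨z, hz, hzw⟩ := hN.surjOn (Set.mem_image_of_mem cell hw)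
    refine ⟨z, by simpa using hz, (pi_norm_le_iff_of_nonneg (by positivity)).mpr fun i => ?_⟩
    have hi : |z i * s - w i * s| < 1 := Int.abs_sub_lt_one_of_floor_eq_floor (congrFun hzw i)
    rw [← sub_mul, abs_mul, abs_of_pos hs0] at hi
    rw [Pi.sub_apply, Real.norm_eq_abs, le_div_iff₀ hs0]
    exact hi.le

/-- Continuity of `g` on `[0, 1]` together with a second derivative `g₂` on `(0, 1)`: the regularity
of the log-likelihood along a segment of the parameter set. -/
structure HasSecondDerivOnUnit (g g₂ : ℝ → ℝ) : Prop where
  continuousOn : ContinuousOn g (Set.Icc 0 1)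
  differentiableOn : DifferentiableOn ℝ g (Set.Ioo 0 1)
  hasDerivAt_deriv : ∀ s ∈ Set.Ioo (0 : ℝ) 1, HasDerivAt (deriv g) (g₂ s) s

namespace HasSecondDerivOnUnit

variable {f f₂ g g₂ : ℝ → ℝ}

theorem congr_deriv2 (hg : HasSecondDerivOnUnit g g₂) (h : ∀ s ∈ Set.Ioo (0 : ℝ) 1, g₂ s = f₂ s) :
    HasSecondDerivOnUnit g f₂ :=
  ⟨hg.continuousOn, hg.differentiableOn, fun s hs => h s hs ▸ hg.hasDerivAt_deriv s hs⟩

theorem const_mul_sq (c : ℝ) : HasSecondDerivOnUnit (fun s => c / 2 * s ^ 2) fun _ => c := by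
  have hderiv : (deriv fun s : ℝ => c / 2 * s ^ 2) = fun s => c * s := by
    funext s
    exact (((hasDerivAt_pow 2 s).const_mul (c / 2)).congr_deriv (by push_cast; ring)).deriv
  refine ⟨by fun_prop, by fun_prop, fun s _ => ?_⟩
  rw [hderiv]
  simpa using (hasDerivAt_id s).const_mul c

theorem sub (hf : HasSecondDerivOnUnit f f₂) (hg : HasSecondDerivOnUnit g g₂) :
    HasSecondDerivOnUnit (fun s => f s - g s) fun s => f₂ s - g₂ s := by
  refine ⟨hf.continuousOn.sub hg.continuousOn, hf.differentiableOn.sub hg.differentiableOn,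
    fun s hs => ?_⟩
  refine ((hf.hasDerivAt_deriv s hs).sub (hg.hasDerivAt_deriv s hs)).congr_of_eventuallyEq ?_
  filter_upwards [isOpen_Ioo.mem_nhds hs] with t ht
  have hnhds := isOpen_Ioo.mem_nhds ht
  exact deriv_sub (hf.differentiableOn.differentiableAt hnhds)
    (hg.differentiableOn.differentiableAt hnhds)

theorem deriv2_eq (hg : HasSecondDerivOnUnit g g₂) {s : ℝ} (hs : s ∈ Set.Ioo (0 : ℝ) 1) :
    deriv^[2] g s = g₂ s :=
  (hg.hasDerivAt_deriv s hs).deriv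

theorem convexOn (hg : HasSecondDerivOnUnit g g₂) (h : ∀ s ∈ Set.Ioo (0 : ℝ) 1, 0 ≤ g₂ s) :
    ConvexOn ℝ (Set.Icc 0 1) g := by
  refine convexOn_of_deriv2_nonneg (convex_Icc 0 1) hg.continuousOn ?_ ?_ ?_ <;>
    rw [interior_Icc]
  · exact hg.differentiableOn
  · exact fun s hs => (hg.hasDerivAt_deriv s hs).differentiableAt.differentiableWithinAt
  · exact fun s hs => (hg.deriv2_eq hs).symm ▸ h s hs

theorem strictConcaveOn (hg : HasSecondDerivOnUnit g g₂) (h : ∀ s ∈ Set.Ioo (0 : ℝ) 1, g₂ s < 0) :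
    StrictConcaveOn ℝ (Set.Icc 0 1) g := by
  refine strictConcaveOn_of_deriv2_neg (convex_Icc 0 1) hg.continuousOn ?_
  rw [interior_Icc]
  exact fun s hs => (hg.deriv2_eq hs).symm ▸ h s hs

theorem eq_affine (hg : HasSecondDerivOnUnit g fun _ => 0) {s : ℝ} (hs : s ∈ Set.Icc (0 : ℝ) 1) :
    g s = (1 - s) * g 0 + s * g 1 := by
  have h0 : (0 : ℝ) ∈ Set.Icc (0 : ℝ) 1 := by simp
  have h1 : (1 : ℝ) ∈ Set.Icc (0 : ℝ) 1 := by simp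
  have hs' : 0 ≤ 1 - s := by linarith [hs.2]
  have hle := (hg.convexOn fun _ _ => le_rfl).2 h0 h1 hs' hs.1 (by ring)
  have hge := (((const_mul_sq 0).sub hg).convexOn fun _ _ => by simp).2 h0 h1 hs' hs.1 (by ring)
  simp only [smul_eq_mul, mul_zero, mul_one, zero_add, zero_div, zero_mul, zero_sub] at hle hge
  linarith

theorem second_difference_le (hg : HasSecondDerivOnUnit g g₂) {C : ℝ}
    (hC : ∀ s ∈ Set.Ioo (0 : ℝ) 1, g₂ s ≤ C) {s : ℝ} (hs : s ∈ Set.Icc (0 : ℝ) (1 / 2)) :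
    g (2 * s) - 2 * g s + g 0 ≤ C * s ^ 2 := by
  have hconv := ((const_mul_sq C).sub hg).convexOn fun t ht => sub_nonneg.mpr (hC t ht)
  have h0 : (0 : ℝ) ∈ Set.Icc (0 : ℝ) 1 := by simp
  have h2s : 2 * s ∈ Set.Icc (0 : ℝ) 1 := ⟨by linarith [hs.1], by linarith [hs.2]⟩
  have hmid := hconv.2 h0 h2s (inv_nonneg.mpr zero_le_two) (inv_nonneg.mpr zero_le_two)
    (by norm_num)
  rw [smul_zero, zero_add, smul_eq_mul, inv_mul_cancel_left₀ two_ne_zero] at hmid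
  simp only [smul_eq_mul] at hmid
  nlinarith

end HasSecondDerivOnUnit

theorem eventually_ne_of_strictConcaveOn {g : ℝ → ℝ} {a b : ℝ} (hab : a < b)
    (hg : StrictConcaveOn ℝ (Set.Icc a b) g) (c : ℝ) :
    ∀ᶠ s in nhdsWithin a (Set.Ioi a), g s ≠ c := by
  by_contra hcon
  have hfreq : ∃ᶠ s in nhdsWithin a (Set.Ioi a), g s = c := by simpa using hcon
  have hbelow : ∀ t > a, ∃ s ∈ Set.Ioo a t, g s = c := fun t ht =>
    ((hfreq.and_eventually (Ioo_mem_nhdsGT ht)).exists).imp fun s hs => ⟨hs.2, hs.1⟩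
  obtain ⟨z, hz, hgz⟩ := hbelow b hab
  obtain ⟨y, hy, hgy⟩ := hbelow z hz.1
  obtain ⟨x, hx, hgx⟩ := hbelow y hy.1
  have hslope := hg.slope_anti_adjacent (x := x) (y := y) (z := z)
    ⟨hx.1.le, by linarith [hx.2, hy.2, hz.2]⟩ ⟨hz.1.le, hz.2.le⟩ hx.2 hy.2
  simp [hgx, hgy, hgz] at hslope

/-- The matrix `-(∂²F/∂zᵢ∂zⱼ)`, with the order of differentiation of `Jhat1`; no differentiability
of `F` is built in, so that the partial derivatives may be junk zeros. -/
def negHessian {ι : Type*} [Fintype ι] [DecidableEq ι] (F : (ι → ℝ) → ℝ) (z : ι → ℝ) :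
    Matrix ι ι ℝ :=
  Matrix.of fun i j =>
    -(fderiv ℝ (fun z' => fderiv ℝ F z' (Pi.single j 1)) z (Pi.single i 1))

theorem hasDerivAt_line {V : Type*} [NormedAddCommGroup V] [NormedSpace ℝ V] (w v : V) (s : ℝ) :
    HasDerivAt (fun s : ℝ => w + s • v) v s := by
  simpa using ((hasDerivAt_id s).smul_const v).const_add w

theorem hasDerivAt_deriv_line_of_fderiv {V : Type*} [NormedAddCommGroup V] [NormedSpace ℝ V]
    {F : V → ℝ} {w v : V} {s₀ c : ℝ} (hF : ContinuousAt (deriv fun s : ℝ => F (w + s • v)) s₀)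
    (hF' : HasDerivAt (fun s : ℝ => fderiv ℝ F (w + s • v) v) c s₀) (hc : c ≠ 0) :
    HasDerivAt (deriv fun s : ℝ => F (w + s • v)) c s₀ := by
  -- Where `fderiv` does not vanish it is not a junk value, so the chain rule applies there.
  have hpunctured : (deriv fun s : ℝ => F (w + s • v))
      =ᶠ[nhdsWithin s₀ {s₀}ᶜ] fun s => fderiv ℝ F (w + s • v) v := by
    filter_upwards [hF'.eventually_ne (c := 0) hc] with s hs
    have hdiff : DifferentiableAt ℝ F (w + s • v) := by
      by_contra hcon
      exact hs (by rw [fderiv_zero_of_not_differentiableAt hcon]; rfl)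
    exact (hdiff.hasFDerivAt.comp_hasDerivAt s (hasDerivAt_line w v s)).deriv
  have hcenter : deriv (fun s : ℝ => F (w + s • v)) s₀ = fderiv ℝ F (w + s₀ • v) v :=
    tendsto_nhds_unique_of_eventuallyEq (hF.tendsto.mono_left nhdsWithin_le_nhds)
      (hF'.continuousAt.tendsto.mono_left nhdsWithin_le_nhds) hpunctured
  exact hF'.congr_of_eventuallyEq (eventuallyEq_nhds_of_eventuallyEq_nhdsNE hpunctured hcenter)

section NegHessian

variable {ι : Type*} [Fintype ι] [DecidableEq ι] {F : (ι → ℝ) → ℝ}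

theorem differentiableAt_fderiv_single {z : ι → ℝ} {j : ι} (hj : negHessian F z j j ≠ 0) :
    DifferentiableAt ℝ (fun z' => fderiv ℝ F z' (Pi.single j 1)) z := by
  by_contra hcon
  exact hj (by simp [negHessian, fderiv_zero_of_not_differentiableAt hcon])

theorem hasDerivAt_fderiv_line {w v : ι → ℝ} {s₀ : ℝ}
    (hdiag : ∀ j, negHessian F (w + s₀ • v) j j ≠ 0) :
    HasDerivAt (fun s : ℝ => fderiv ℝ F (w + s • v) v)
      (-(v ⬝ᵥ (negHessian F (w + s₀ • v)).mulVec v)) s₀ := by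
  have hexpand : ∀ L : (ι → ℝ) →L[ℝ] ℝ, L v = ∑ j, v j * L (Pi.single j 1) := fun L => by
    conv_lhs => rw [pi_eq_sum_univ' v]
    simp [map_sum]
  have hpartial : ∀ j, HasDerivAt (fun s : ℝ => fderiv ℝ F (w + s • v) (Pi.single j 1))
      (∑ i, v i * -negHessian F (w + s₀ • v) i j) s₀ := fun j => by
    have := (differentiableAt_fderiv_single (hdiag j)).hasFDerivAt.comp_hasDerivAt s₀
      (hasDerivAt_line w v s₀)
    simpa only [hexpand (fderiv ℝ _ _), negHessian, Matrix.of_apply, neg_neg, Function.comp_def]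
      using this
  have hsum := HasDerivAt.fun_sum fun j (_ : j ∈ Finset.univ) => (hpartial j).const_mul (v j)
  simp only [← hexpand] at hsum
  refine hsum.congr_deriv ?_
  simp only [dotProduct, Matrix.mulVec, Finset.mul_sum, mul_neg, Finset.sum_neg_distrib]
  rw [Finset.sum_comm]
  exact congrArg Neg.neg (Finset.sum_congr rfl fun i _ => Finset.sum_congr rfl fun j _ => by ring)

theorem hasDerivAt_deriv_line {w v : ι → ℝ} {s₀ : ℝ}
    (hF : ContinuousAt (deriv fun s : ℝ => F (w + s • v)) s₀)
    (hpos : ∀ u : ι → ℝ, u ≠ 0 → 0 < u ⬝ᵥ (negHessian F (w + s₀ • v)).mulVec u) :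
    HasDerivAt (deriv fun s : ℝ => F (w + s • v))
      (-(v ⬝ᵥ (negHessian F (w + s₀ • v)).mulVec v)) s₀ := by
  rcases eq_or_ne v 0 with rfl | hv
  · simpa using hasDerivAt_const s₀ (0 : ℝ)
  have hdiag : ∀ j, negHessian F (w + s₀ • v) j j ≠ 0 := fun j => by
    have := hpos (Pi.single j 1) (by simp)
    simpa using this.ne'
  exact hasDerivAt_deriv_line_of_fderiv hF (hasDerivAt_fderiv_line hdiag)
    (neg_ne_zero.mpr (hpos v hv).ne')

theorem hasSecondDerivOnUnit_line {Θ : Set (ι → ℝ)} {w v : ι → ℝ} (hF : ContDiffOn ℝ 1 F Θ)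
    (hseg : ∀ s ∈ Set.Icc (0 : ℝ) 1, w + s • v ∈ Θ)
    (hpos : ∀ z ∈ Θ, ∀ u : ι → ℝ, u ≠ 0 → 0 < u ⬝ᵥ (negHessian F z).mulVec u) :
    HasSecondDerivOnUnit (fun s => F (w + s • v))
      fun s => -(v ⬝ᵥ (negHessian F (w + s • v)).mulVec v) := by
  have hφ : ContDiffOn ℝ 1 (fun s : ℝ => F (w + s • v)) (Set.Icc 0 1) :=
    hF.comp (f := fun s : ℝ => w + s • v) (ContDiff.contDiffOn (by fun_prop)) hseg
  have hφo := hφ.mono Set.Ioo_subset_Icc_self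
  refine ⟨hφ.continuousOn, hφo.differentiableOn one_ne_zero, fun s hs => ?_⟩
  exact hasDerivAt_deriv_line
    ((hφo.continuousOn_deriv_of_isOpen isOpen_Ioo le_rfl).continuousAt (isOpen_Ioo.mem_nhds hs))
    (hpos _ (hseg s (Set.Ioo_subset_Icc_self hs)))

end NegHessian

theorem sub_eq_fderivWithin_of_affine {V : Type*} [NormedAddCommGroup V] [NormedSpace ℝ V]
    {g : V → ℝ} {Θ : Set V} {θ₀ θ : V} (hΘ : Convex ℝ Θ) (hθ₀ : θ₀ ∈ Θ) (hθ : θ ∈ Θ)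
    (hg : DifferentiableWithinAt ℝ g Θ θ₀)
    (haff : ∀ s ∈ Set.Icc (0 : ℝ) 1, g (θ₀ + s • (θ - θ₀)) = (1 - s) * g θ₀ + s * g θ) :
    g θ - g θ₀ = fderivWithin ℝ g Θ θ₀ (θ - θ₀) := by
  have h0 : (0 : ℝ) ∈ Set.Icc (0 : ℝ) 1 := by simp
  have hchain : HasDerivWithinAt (fun s : ℝ => g (θ₀ + s • (θ - θ₀)))
      (fderivWithin ℝ g Θ θ₀ (θ - θ₀)) (Set.Icc 0 1) 0 :=
    HasFDerivWithinAt.comp_hasDerivWithinAt_of_eq 0 hg.hasFDerivWithinAt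
      (hasDerivAt_line θ₀ (θ - θ₀) 0).hasDerivWithinAt
      (fun s hs => hΘ.add_smul_sub_mem hθ₀ hθ hs) (by simp)
  have hline : HasDerivWithinAt (fun s : ℝ => g (θ₀ + s • (θ - θ₀))) (g θ - g θ₀)
      (Set.Icc 0 1) 0 := by
    have : HasDerivAt (fun s : ℝ => g θ₀ + s • (g θ - g θ₀)) (g θ - g θ₀) 0 :=
      hasDerivAt_line _ _ 0
    exact this.hasDerivWithinAt.congr_of_mem
      (fun s hs => by rw [haff s hs, smul_eq_mul]; ring) h0
  exact (uniqueDiffOn_Icc zero_lt_one 0 h0).eq_deriv _ hline hchain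

section Densities

variable {X : Type*} [MeasurableSpace X] {μ : Measure X}

/-- A strictly positive probability density with respect to `μ`. -/
structure IsPosDensity (μ : Measure X) (q : X → ℝ) : Prop where
  measurable : Measurable q
  pos : ∀ x, 0 < q x
  integral_eq_one : ∫ x, q x ∂μ = 1

theorem IsPosDensity.integrable {q : X → ℝ} (hq : IsPosDensity μ q) : Integrable q μ :=
  integrable_of_integral_eq_one hq.integral_eq_one

theorem IsPosDensity.setIntegral_add_compl {q : X → ℝ} (hq : IsPosDensity μ q) {A : Set X}
    (hA : MeasurableSet A) : ∫ x in A, q x ∂μ + ∫ x in Aᶜ, q x ∂μ = 1 := by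
  rw [integral_add_compl hA hq.integrable, hq.integral_eq_one]

theorem IsPosDensity.setIntegral_le_one {q : X → ℝ} (hq : IsPosDensity μ q) (A : Set X) :
    ∫ x in A, q x ∂μ ≤ 1 :=
  hq.integral_eq_one ▸ setIntegral_le_integral hq.integrable (ae_of_all _ fun x => (hq.pos x).le)

theorem mul_div_rpow_one_sub {a b : ℝ} (ha : 0 < a) (hb : 0 ≤ b) (lam : ℝ) :
    a * (b / a) ^ (1 - lam) = a ^ lam * b ^ (1 - lam) := by
  rw [Real.div_rpow hb ha.le, Real.rpow_sub ha, Real.rpow_one]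
  have := (Real.rpow_pos_of_pos ha lam).ne'
  field_simp

/-- The affinity `E_p[(q/p)^{1-lam}]`, whose logarithm is `-(1 - lam)` times the Rényi
divergence. -/
def renyiAffinity (μ : Measure X) (lam : ℝ) (p q : X → ℝ) : ℝ :=
  ∫ x, p x * (q x / p x) ^ (1 - lam) ∂μ

theorem rpow_renyiAffinity {lam : ℝ} (hlam : lam < 1) {p q : X → ℝ}
    (h : 0 < renyiAffinity μ lam p q) (t : ℝ) :
    renyiAffinity μ lam p q ^ t = Real.exp (-(t * (1 - lam) * renyiDiv μ lam p q)) := by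
  rw [Real.rpow_def_of_pos h, renyiDiv, renyiAffinity]
  congr 1
  have : 1 - lam ≠ 0 := by linarith
  field_simp

theorem integrable_renyiAffinity {lam : ℝ} (h₀ : 0 ≤ lam) (h₁ : lam ≤ 1) {p q : X → ℝ}
    (hp : IsPosDensity μ p) (hq : IsPosDensity μ q) :
    Integrable (fun x => p x * (q x / p x) ^ (1 - lam)) μ := by
  refine ((hp.integrable.const_mul lam).add (hq.integrable.const_mul (1 - lam))).mono'
    (hp.measurable.mul ((hq.measurable.div hp.measurable).pow_const _)).aestronglyMeasurable
    (ae_of_all _ fun x => ?_)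
  have h := Real.geom_mean_le_arith_mean2_weighted h₀ (sub_nonneg.2 h₁) (hp.pos x).le
    (hq.pos x).le (by ring)
  rwa [mul_div_rpow_one_sub (hp.pos x) (hq.pos x).le, Real.norm_of_nonneg]
  exact mul_nonneg (Real.rpow_nonneg (hp.pos x).le _) (Real.rpow_nonneg (hq.pos x).le _)

theorem integrableOn_mul_of_abs_le {p f : X → ℝ} (hp : IsPosDensity μ p) (hf : Measurable f)
    {A : Set X} (hA : MeasurableSet A) {b : ℝ} (hb : ∀ x ∈ A, |f x| ≤ b) :
    IntegrableOn (fun x => p x * f x) A μ := by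
  refine (hp.integrable.integrableOn.mul_const b).mono'
    (hp.measurable.mul hf).aestronglyMeasurable ((ae_restrict_mem hA).mono fun x hx => ?_)
  rw [norm_mul, Real.norm_of_nonneg (hp.pos x).le]
  exact mul_le_mul_of_nonneg_left (hb x hx) (hp.pos x).le

theorem setIntegral_mul_sub_sq_le {p f : X → ℝ} (hp : IsPosDensity μ p) {A : Set X}
    (hint : IntegrableOn (fun x => p x * f x ^ 2) A μ) (c : ℝ) :
    ∫ x in A, p x * (f x - c) ^ 2 ∂μ ≤ 2 * ∫ x in A, p x * f x ^ 2 ∂μ + 2 * c ^ 2 := by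
  have hpA := (hp.integrable.integrableOn (s := A)).const_mul (2 * c ^ 2)
  have hpt : ∀ x, p x * (f x - c) ^ 2 ≤ 2 * (p x * f x ^ 2) + 2 * c ^ 2 * p x := fun x => by
    have hsq : (f x - c) ^ 2 ≤ 2 * f x ^ 2 + 2 * c ^ 2 := by nlinarith [sq_nonneg (f x + c)]
    linarith [mul_le_mul_of_nonneg_left hsq (hp.pos x).le]
  calc _ ≤ ∫ x in A, (2 * (p x * f x ^ 2) + 2 * c ^ 2 * p x) ∂μ :=
        integral_mono_of_nonneg (ae_of_all _ fun x => mul_nonneg (hp.pos x).le (sq_nonneg _))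
          ((hint.const_mul 2).add hpA) (ae_of_all _ hpt)
    _ = 2 * ∫ x in A, p x * f x ^ 2 ∂μ + 2 * c ^ 2 * ∫ x in A, p x ∂μ := by
        rw [integral_add (hint.const_mul 2) hpA, integral_const_mul, integral_const_mul]
    _ ≤ _ := add_le_add_right
        (mul_le_of_le_one_right (by positivity) (hp.setIntegral_le_one A)) _

section LogRatio

variable {p q : X → ℝ} {A : Set X} {b r : ℝ}

theorem measurable_log_div (hp : IsPosDensity μ p) (hq : IsPosDensity μ q) :
    Measurable fun x => Real.log (q x / p x) :=
  Real.measurable_log.comp (hq.measurable.div hp.measurable)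

theorem div_rpow_eq_exp_log {a c : ℝ} (ha : 0 < a) (hc : 0 < c) (r : ℝ) :
    (a / c) ^ r = Real.exp (-(r * Real.log (c / a))) := by
  rw [← inv_div, Real.inv_rpow (div_pos hc ha).le, Real.rpow_def_of_pos (div_pos hc ha),
    ← Real.exp_neg, mul_comm r]

theorem integrableOn_mul_div_rpow (hp : IsPosDensity μ p) (hq : IsPosDensity μ q)
    (hA : MeasurableSet A) (hr : 0 ≤ r) (hb : ∀ x ∈ A, |Real.log (q x / p x)| ≤ b) :
    IntegrableOn (fun x => p x * (p x / q x) ^ r) A μ := by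
  refine integrableOn_mul_of_abs_le (f := fun x => (p x / q x) ^ r) (b := Real.exp (r * b)) hp
    ((hp.measurable.div hq.measurable).pow_const r) hA fun x hx => ?_
  rw [div_rpow_eq_exp_log (hp.pos x) (hq.pos x), abs_of_pos (Real.exp_pos _), ← mul_neg]
  exact Real.exp_le_exp.2
    (mul_le_mul_of_nonneg_left (neg_le_of_neg_le (abs_le.1 (hb x hx)).1) hr)

/- The first order term of the expansion of `(p/q)^r` in `log (q/p)` integrates to a difference of
masses of `A`, so that the bound is of second order. -/
theorem setIntegral_mul_div_rpow_le (hp : IsPosDensity μ p) (hq : IsPosDensity μ q)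
    (hA : MeasurableSet A) (hr : 0 ≤ r) (hb : ∀ x ∈ A, |Real.log (q x / p x)| ≤ b) :
    ∫ x in A, p x * (p x / q x) ^ r ∂μ
      ≤ 1 + r * ∫ x in Aᶜ, q x ∂μ
        + (r * Real.exp b + r ^ 2 * Real.exp (r * b))
          * ∫ x in A, p x * Real.log (q x / p x) ^ 2 ∂μ := by
  set c := r * Real.exp b + r ^ 2 * Real.exp (r * b)
  have hpA := hp.integrable.integrableOn (s := A)
  have hqA := hq.integrable.integrableOn (s := A)
  have hlog : IntegrableOn (fun x => p x * Real.log (q x / p x) ^ 2) A μ :=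
    integrableOn_mul_of_abs_le hp ((measurable_log_div hp hq).pow_const 2) hA fun x hx => by
      rw [abs_pow]
      exact pow_le_pow_left₀ (abs_nonneg _) (hb x hx) 2
  have hsub : IntegrableOn (fun x => r * (p x - q x)) A μ := (hpA.sub hqA).const_mul r
  have hlin : IntegrableOn (fun x => p x + r * (p x - q x)) A μ := hpA.add hsub
  have hpt : ∀ x ∈ A, p x * (p x / q x) ^ r
      ≤ p x + r * (p x - q x) + c * (p x * Real.log (q x / p x) ^ 2) := fun x hx => by
    have h := mul_le_mul_of_nonneg_left (exp_neg_mul_le_one_add_sq hr (hb x hx)) (hp.pos x).le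
    rw [Real.exp_log (div_pos (hq.pos x) (hp.pos x))] at h
    rw [div_rpow_eq_exp_log (hp.pos x) (hq.pos x)]
    refine h.trans_eq ?_
    have := (hp.pos x).ne'
    change _ = _ + r * _ + (r * Real.exp b + r ^ 2 * Real.exp (r * b)) * _
    field_simp
  have hmono := setIntegral_mono_on (integrableOn_mul_div_rpow hp hq hA hr hb)
    (hlin.add (hlog.const_mul c)) hA hpt
  have heval : ∫ x in A, (p x + r * (p x - q x) + c * (p x * Real.log (q x / p x) ^ 2)) ∂μ
      = (∫ x in A, p x ∂μ) + r * ((∫ x in A, p x ∂μ) - ∫ x in A, q x ∂μ)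
        + c * ∫ x in A, p x * Real.log (q x / p x) ^ 2 ∂μ := by
    rw [integral_add hlin (hlog.const_mul c), integral_add hpA hsub, integral_const_mul,
      integral_const_mul, integral_sub hpA hqA]
  have hdiff : (∫ x in A, p x ∂μ) - ∫ x in A, q x ∂μ ≤ ∫ x in Aᶜ, q x ∂μ := by
    linarith [hq.setIntegral_add_compl hA, hp.setIntegral_le_one A]
  calc _ ≤ _ := hmono
    _ = _ := heval
    _ ≤ _ := by gcongr; exact hp.setIntegral_le_one A

end LogRatio

open Classical in
/-- The density which is proportional to `p` on `A` and equals `p₀` off `A`, with the same mass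
on `A` as `p₀`. Likelihood ratios between such densities are trivial off `A`. -/
def splice (μ : Measure X) (A : Set X) (p₀ p : X → ℝ) : X → ℝ :=
  A.piecewise (fun x => (∫ y in A, p₀ y ∂μ) / (∫ y in A, p y ∂μ) * p x) p₀

section Splice

variable {A : Set X} {p₀ p : X → ℝ} {x : X}

theorem splice_of_mem (hx : x ∈ A) :
    splice μ A p₀ p x = (∫ y in A, p₀ y ∂μ) / (∫ y in A, p y ∂μ) * p x := by
  classical
  exact Set.piecewise_eq_of_mem _ _ _ hx

theorem splice_of_mem_compl (hx : x ∈ Aᶜ) : splice μ A p₀ p x = p₀ x := by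
  classical
  exact Set.piecewise_eq_of_notMem _ _ _ hx

theorem isPosDensity_splice (hA : MeasurableSet A) (hp₀ : IsPosDensity μ p₀)
    (hp : IsPosDensity μ p) (hp₀A : 0 < ∫ y in A, p₀ y ∂μ) (hpA : 0 < ∫ y in A, p y ∂μ) :
    IsPosDensity μ (splice μ A p₀ p) where
  measurable := (hp.measurable.const_mul _).piecewise hA hp₀.measurable
  pos x := by
    by_cases hx : x ∈ A
    · rw [splice_of_mem hx]
      exact mul_pos (div_pos hp₀A hpA) (hp.pos x)
    · rw [splice_of_mem_compl hx]
      exact hp₀.pos x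
  integral_eq_one := by
    classical
    rw [splice, integral_piecewise hA (hp.integrable.const_mul _).integrableOn
      hp₀.integrable.integrableOn, integral_const_mul, div_mul_cancel₀ _ hpA.ne',
      hp₀.setIntegral_add_compl hA]

end Splice

theorem setIntegral_le_integral_of_le_on {f g : X → ℝ} {A : Set X} (hA : MeasurableSet A)
    (hf : ∀ x, 0 ≤ f x) (hg : ∀ x, 0 ≤ g x) (hgi : Integrable g μ) (hfg : ∀ x ∈ A, f x ≤ g x) :
    ∫ x in A, f x ∂μ ≤ ∫ x, g x ∂μ :=
  (integral_mono_of_nonneg (ae_of_all _ hf) hgi.integrableOn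
    ((ae_restrict_mem hA).mono hfg)).trans (setIntegral_le_integral hgi (ae_of_all _ hg))

theorem measurableSet_neg_log_prod_le {ι : Type*} [Fintype ι] {q q' : X → ℝ}
    (hq : Measurable q) (hq' : Measurable q') :
    MeasurableSet {x : ι → X | -Real.log (∏ t, q (x t)) ≤ -Real.log (∏ t, q' (x t))} := by
  apply measurableSet_le <;>
    exact (Real.measurable_log.comp (by fun_prop)).neg

/- Chernoff's bound: on the event, the likelihood ratio of `q` to `q'`, and so its `r`-th power,
is at least one. -/
theorem setIntegral_prod_le_pow [SigmaFinite μ] {ι : Type*} [Fintype ι] {p q q' : X → ℝ} {r : ℝ}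
    (hr : 0 ≤ r) (hp : ∀ x, 0 ≤ p x) (hq : ∀ x, 0 < q x) (hq' : ∀ x, 0 < q' x)
    (hqm : Measurable q) (hqm' : Measurable q')
    (hint : Integrable (fun x => p x * (q x / q' x) ^ r) μ) :
    ∫ x in {x : ι → X | -Real.log (∏ t, q (x t)) ≤ -Real.log (∏ t, q' (x t))},
      ∏ t, p (x t) ∂(Measure.pi fun _ => μ)
      ≤ (∫ x, p x * (q x / q' x) ^ r ∂μ) ^ Fintype.card ι := by
  set F : (ι → X) → ℝ := fun x => ∏ t, (p (x t) * (q (x t) / q' (x t)) ^ r) with hF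
  have hFint : Integrable F (Measure.pi fun _ => μ) := Integrable.fintype_prod fun _ => hint
  have hFnn : ∀ x, 0 ≤ F x := fun x => Finset.prod_nonneg fun t _ =>
    mul_nonneg (hp _) (Real.rpow_nonneg (div_nonneg (hq _).le (hq' _).le) _)
  have hFeq : ∫ x, F x ∂(Measure.pi fun _ => μ)
      = (∫ x, p x * (q x / q' x) ^ r ∂μ) ^ Fintype.card ι := by
    rw [hF, integral_fintype_prod_eq_prod (f := fun _ x => p x * (q x / q' x) ^ r),
      Finset.prod_const, Finset.card_univ]
  rw [← hFeq]
  refine setIntegral_le_integral_of_le_on (measurableSet_neg_log_prod_le hqm hqm')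
    (fun x => Finset.prod_nonneg fun t _ => hp _) hFnn hFint fun x hx => ?_
  have hQ : 0 < ∏ t, q (x t) := Finset.prod_pos fun t _ => hq _
  have hQ' : 0 < ∏ t, q' (x t) := Finset.prod_pos fun t _ => hq' _
  have hratio : 1 ≤ (∏ t, q (x t)) / ∏ t, q' (x t) :=
    (one_le_div hQ').2 ((Real.log_le_log_iff hQ' hQ).1 (neg_le_neg_iff.1 hx))
  have hsplit : F x = (∏ t, p (x t)) * ((∏ t, q (x t)) / ∏ t, q' (x t)) ^ r := by
    rw [show F x = ∏ t, (p (x t) * (q (x t) / q' (x t)) ^ r) from rfl,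
      Finset.prod_mul_distrib, ← Finset.prod_div_distrib,
      Real.finsetProd_rpow _ _ fun t _ => div_nonneg (hq _).le (hq' _).le]
  rw [hsplit]
  exact le_mul_of_one_le_right (Finset.prod_nonneg fun t _ => hp _)
    (Real.one_le_rpow hratio hr)

end Densities

section ExponentialFamily

section Algebra

variable {X V : Type*} [AddCommGroup V] [Module ℝ V]

/-- The member with parameter `θ` of the canonical exponential family with statistic `T`, log
carrier `h` and log partition function `ψ`. -/
def expDensity (T : X → V →ₗ[ℝ] ℝ) (h : X → ℝ) (ψ : V → ℝ) (θ : V) (x : X) : ℝ :=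
  Real.exp (T x θ + h x - ψ θ)

variable {T : X → V →ₗ[ℝ] ℝ} {h : X → ℝ} {ψ : V → ℝ}

theorem log_div_expDensity (w z : V) (x : X) :
    Real.log (expDensity T h ψ z x / expDensity T h ψ w x) = T x (z - w) - (ψ z - ψ w) := by
  rw [expDensity, expDensity, ← Real.exp_sub, Real.log_exp, map_sub]
  ring

theorem expDensity_mul_exp (w u : V) (x : X) :
    expDensity T h ψ w x * Real.exp (T x u)
      = Real.exp (ψ (w + u) - ψ w) * expDensity T h ψ (w + u) x := by
  rw [expDensity, expDensity, ← Real.exp_add, ← Real.exp_add, map_add]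
  ring_nf

theorem expDensity_rpow_mul_rpow (lam : ℝ) (s θ : V) (x : X) :
    expDensity T h ψ s x ^ lam * expDensity T h ψ θ x ^ (1 - lam)
      = Real.exp (ψ (s + (1 - lam) • (θ - s)) - lam * ψ s - (1 - lam) * ψ θ)
        * expDensity T h ψ (s + (1 - lam) • (θ - s)) x := by
  simp only [expDensity, ← Real.exp_mul, ← Real.exp_add, map_add, map_smul, map_sub, smul_eq_mul]
  ring_nf

end Algebra

variable {X : Type*} [MeasurableSpace X] {μ : Measure X}
  {V : Type*} [NormedAddCommGroup V] [NormedSpace ℝ V]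

/-- A canonical exponential family over a compact convex parameter set `Θ`, whose log partition
function `ψ` is Lipschitz and has bounded second differences. The latter replaces an upper bound on
the Fisher information, without presupposing an interior point of `Θ`. -/
structure IsRegularExpFamily (μ : Measure X) (Θ : Set V) (T : X → V →ₗ[ℝ] ℝ) (h : X → ℝ)
    (ψ : V → ℝ) : Prop where
  convex : Convex ℝ Θ
  isCompact : IsCompact Θ
  isPosDensity : ∀ θ ∈ Θ, IsPosDensity μ (expDensity T h ψ θ)
  lipschitz : ∃ L, LipschitzOnWith L ψ Θ
  second_difference : ∃ C : ℝ, ∀ w ∈ Θ, ∀ v ∈ Θ, ∀ s : ℝ, 0 ≤ s → 2 * s ≤ 1 →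
    ψ (w + (2 * s) • (v - w)) - 2 * ψ (w + s • (v - w)) + ψ w ≤ C * s ^ 2

variable {Θ : Set V} {T : X → V →ₗ[ℝ] ℝ} {h : X → ℝ} {ψ : V → ℝ}

namespace IsRegularExpFamily

theorem measurable_stat (hF : IsRegularExpFamily μ Θ T h ψ) {w z : V} (hw : w ∈ Θ) (hz : z ∈ Θ) :
    Measurable fun x => T x (z - w) := by
  have hm := (measurable_log_div (hF.isPosDensity w hw) (hF.isPosDensity z hz)).add_const
    (ψ z - ψ w)
  simpa only [log_div_expDensity, sub_add_cancel] using hm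

theorem integral_mul_exp_sub_one_sq (hF : IsRegularExpFamily μ Θ T h ψ) {w u : V} (hw : w ∈ Θ)
    (hu : w + u ∈ Θ) (hu₂ : w + (2 : ℝ) • u ∈ Θ) :
    Integrable (fun x => expDensity T h ψ w x * (Real.exp (T x u) - 1) ^ 2) μ ∧
    ∫ x, expDensity T h ψ w x * (Real.exp (T x u) - 1) ^ 2 ∂μ
      = Real.exp (ψ (w + (2 : ℝ) • u) - ψ w) - 2 * Real.exp (ψ (w + u) - ψ w) + 1 := by
  have hexpand : (fun x => expDensity T h ψ w x * (Real.exp (T x u) - 1) ^ 2) = fun x =>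
      Real.exp (ψ (w + (2 : ℝ) • u) - ψ w) * expDensity T h ψ (w + (2 : ℝ) • u) x
        - 2 * Real.exp (ψ (w + u) - ψ w) * expDensity T h ψ (w + u) x + expDensity T h ψ w x := by
    ext x
    have hsq : Real.exp (T x ((2 : ℝ) • u)) = Real.exp (T x u) ^ 2 := by
      rw [map_smul, smul_eq_mul, ← Real.exp_nat_mul, Nat.cast_ofNat]
    rw [mul_assoc 2, ← expDensity_mul_exp, ← expDensity_mul_exp, hsq]
    ring
  have h₀ := hF.isPosDensity w hw
  have h₁ := hF.isPosDensity _ hu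
  have h₂ := hF.isPosDensity _ hu₂
  have hsub : Integrable (fun x =>
      Real.exp (ψ (w + (2 : ℝ) • u) - ψ w) * expDensity T h ψ (w + (2 : ℝ) • u) x
        - 2 * Real.exp (ψ (w + u) - ψ w) * expDensity T h ψ (w + u) x) μ :=
    (h₂.integrable.const_mul _).sub (h₁.integrable.const_mul _)
  rw [hexpand]
  refine ⟨hsub.add h₀.integrable, ?_⟩
  rw [integral_add hsub h₀.integrable, integral_sub (h₂.integrable.const_mul _)
    (h₁.integrable.const_mul _), integral_const_mul, integral_const_mul, h₀.integral_eq_one,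
    h₁.integral_eq_one, h₂.integral_eq_one, mul_one, mul_one]

theorem exists_integral_mul_exp_sub_one_sq_le (hF : IsRegularExpFamily μ Θ T h ψ) :
    ∃ C : ℝ, 0 ≤ C ∧ ∀ w ∈ Θ, ∀ v ∈ Θ, ∀ s : ℝ, 0 ≤ s → 2 * s ≤ 1 →
      Integrable (fun x => expDensity T h ψ w x * (Real.exp (T x (s • (v - w))) - 1) ^ 2) μ ∧
      ∫ x, expDensity T h ψ w x * (Real.exp (T x (s • (v - w))) - 1) ^ 2 ∂μ ≤ C * s ^ 2 := by
  obtain ⟨L, hL⟩ := hF.lipschitz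
  obtain ⟨C₀, hC₀⟩ := hF.second_difference
  obtain ⟨D, hD₀, hD⟩ := hF.isCompact.isBounded.exists_pos_norm_le
  set b : ℝ := L * (2 * D)
  refine ⟨Real.exp (2 * b) * (|C₀| * Real.exp |C₀|) + (b * Real.exp b) ^ 2, by positivity,
    fun w hw v hv s hs₀ hs₂ => ?_⟩
  have hs₁ : s ≤ 1 := by linarith
  have hmem : ∀ t : ℝ, 0 ≤ t → t ≤ 1 → w + t • (v - w) ∈ Θ := fun t h₀ h₁ =>
    hF.convex.add_smul_sub_mem hw hv ⟨h₀, h₁⟩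
  obtain ⟨hint, heq⟩ := hF.integral_mul_exp_sub_one_sq hw (hmem s hs₀ hs₁)
    (by rw [smul_smul]; exact hmem (2 * s) (by positivity) hs₂)
  refine ⟨hint, ?_⟩
  have hφ₁ : |ψ (w + s • (v - w)) - ψ w| ≤ b * s := by
    have hlip := hL.dist_le_mul _ (hmem s hs₀ hs₁) w hw
    rw [dist_eq_norm, dist_eq_norm, add_sub_cancel_left, norm_smul, Real.norm_of_nonneg hs₀]
      at hlip
    have hdiam : ‖v - w‖ ≤ 2 * D := (norm_sub_le v w).trans (by linarith [hD v hv, hD w hw])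
    calc _ ≤ L * (s * ‖v - w‖) := hlip
      _ ≤ L * (s * (2 * D)) := by gcongr
      _ = b * s := by ring
  have hφ₂ : (ψ (w + (2 : ℝ) • s • (v - w)) - ψ w) - 2 * (ψ (w + s • (v - w)) - ψ w)
      ≤ |C₀| * s ^ 2 := by
    rw [smul_smul]
    linarith [hC₀ w hw v hv s hs₀ hs₂, mul_le_mul_of_nonneg_right (le_abs_self C₀) (sq_nonneg s)]
  rw [heq]
  exact exp_second_difference_le (by positivity) (abs_nonneg C₀) hs₀ hs₁ hφ₁ hφ₂

theorem exists_integral_min_sq_one_le (hF : IsRegularExpFamily μ Θ T h ψ) :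
    ∃ C : ℝ, 0 ≤ C ∧ ∀ w ∈ Θ, ∀ v ∈ Θ, ∀ R : ℝ, 2 ≤ R →
      ∫ x, expDensity T h ψ w x * min ((T x (v - w) / R) ^ 2) 1 ∂μ ≤ C / R ^ 2 := by
  obtain ⟨C, hC, hexp⟩ := hF.exists_integral_mul_exp_sub_one_sq_le
  refine ⟨4 * C, by positivity, fun w hw v hv R hR => ?_⟩
  have hR₀ : 0 < R := by linarith
  obtain ⟨hint, hle⟩ := hexp w hw v hv R⁻¹ (by positivity)
    (by rw [← div_eq_mul_inv, div_le_one hR₀]; exact hR)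
  have hpos := (hF.isPosDensity w hw).pos
  have hpt : ∀ x, expDensity T h ψ w x * min ((T x (v - w) / R) ^ 2) 1
      ≤ 4 * (expDensity T h ψ w x * (Real.exp (T x (R⁻¹ • (v - w))) - 1) ^ 2) := fun x => by
    rw [map_smul, smul_eq_mul, inv_mul_eq_div, mul_left_comm]
    exact mul_le_mul_of_nonneg_left (min_sq_one_le_exp_sub_one_sq _) (hpos x).le
  calc _ ≤ ∫ x, 4 * (expDensity T h ψ w x * (Real.exp (T x (R⁻¹ • (v - w))) - 1) ^ 2) ∂μ :=
        integral_mono_of_nonneg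
          (ae_of_all _ fun x => mul_nonneg (hpos x).le (le_min (sq_nonneg _) zero_le_one))
          (hint.const_mul 4) (ae_of_all _ hpt)
    _ ≤ 4 * (C * R⁻¹ ^ 2) := by rw [integral_const_mul]; gcongr
    _ = 4 * C / R ^ 2 := by rw [inv_pow]; ring

end IsRegularExpFamily

end ExponentialFamily

section Truncation

theorem one_le_sum_min_sq_one {ι : Type*} {s : Finset ι} {a : ι → ℝ} {R : ℝ} (hR : 0 < R) {i : ι}
    (hi : i ∈ s) (ha : R ≤ |a i|) : 1 ≤ ∑ i ∈ s, min ((a i / R) ^ 2) 1 := by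
  have hsat : min ((a i / R) ^ 2) 1 = 1 := min_eq_right <| by
    rwa [one_le_sq_iff_one_le_abs, abs_div, abs_of_pos hR, one_le_div hR]
  exact hsat.ge.trans <| Finset.single_le_sum (f := fun i => min ((a i / R) ^ 2) 1)
    (fun _ _ => le_min (sq_nonneg _) zero_le_one) hi

section BoundedCoefficients

variable {ι : Type*} [Fintype ι] {c a : ι → ℝ} {C R : ℝ}

theorem abs_sum_mul_le_of_abs_le (hR : 0 < R) (hC : 0 ≤ C) (hc : ∀ i, |c i| ≤ C / R)
    (ha : ∀ i, |a i| ≤ R) : |∑ i, c i * a i| ≤ Fintype.card ι * C := by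
  calc |∑ i, c i * a i| ≤ ∑ i, |c i * a i| := Finset.abs_sum_le_sum_abs _ _
    _ ≤ ∑ _i : ι, C / R * R := Finset.sum_le_sum fun i _ => by
        rw [abs_mul]
        exact mul_le_mul (hc i) (ha i) (abs_nonneg _) (by positivity)
    _ = Fintype.card ι * C := by
        rw [div_mul_cancel₀ _ hR.ne', Finset.sum_const, nsmul_eq_mul, Finset.card_univ]

/- As `|a i| ≤ R`, the truncation on the right-hand side is inactive; it makes sense without that
assumption, and has bounded integral when `a` is a random variable with few moments. -/
theorem sq_sum_mul_le_of_abs_le (hR : 0 < R) (hc : ∀ i, |c i| ≤ C / R) (ha : ∀ i, |a i| ≤ R) :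
    (∑ i, c i * a i) ^ 2 ≤ Fintype.card ι * C ^ 2 * ∑ i, min ((a i / R) ^ 2) 1 := by
  have hterm : ∀ i, (c i * a i) ^ 2 ≤ C ^ 2 * min ((a i / R) ^ 2) 1 := fun i => by
    have haR : |a i / R| ≤ 1 := by rw [abs_div, abs_of_pos hR, div_le_one hR]; exact ha i
    rw [min_eq_left ((sq_le_one_iff_abs_le_one _).2 haR), mul_pow, div_pow, mul_div_left_comm,
      mul_comm, ← div_pow]
    exact mul_le_mul_of_nonneg_left (sq_le_sq' (abs_le.1 (hc i)).1 (abs_le.1 (hc i)).2)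
      (sq_nonneg _)
  calc (∑ i, c i * a i) ^ 2 ≤ Fintype.card ι * ∑ i, (c i * a i) ^ 2 :=
        sq_sum_le_card_mul_sum_sq
    _ ≤ Fintype.card ι * ∑ i, C ^ 2 * min ((a i / R) ^ 2) 1 := by
        gcongr with i
        exact hterm i
    _ = _ := by rw [← Finset.mul_sum, mul_assoc]

end BoundedCoefficients

theorem exists_finset_abs_le_of_mem_span {V : Type*} [NormedAddCommGroup V] [NormedSpace ℝ V]
    [FiniteDimensional ℝ V] (S : Set V) :
    ∃ s : Finset V, ↑s ⊆ S ∧ ∃ C : ℝ, 0 < C ∧ ∀ R : ℝ, 0 < R → ∀ ℓ : V →ₗ[ℝ] ℝ,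
      (∀ u ∈ s, |ℓ u| ≤ R) → ∀ v ∈ Submodule.span ℝ S, ‖v‖ ≤ 1 / R →
        |ℓ v| ≤ C ∧ ℓ v ^ 2 ≤ C * ∑ u ∈ s, min ((ℓ u / R) ^ 2) 1 := by
  obtain ⟨s, hsS, C, hC, hcoeff⟩ := exists_finset_subset_span_coeff_le S
  refine ⟨s, hsS, max (Fintype.card s * C) (Fintype.card s * C ^ 2) + 1, by positivity,
    fun R hR ℓ hℓ v hv hvR => ?_⟩
  obtain ⟨c, hc, hvc⟩ := hcoeff v hv
  have hcR : ∀ u, |c u| ≤ C / R := fun u => by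
    rw [← mul_one_div]
    exact (hc u).trans (mul_le_mul_of_nonneg_left hvR hC.le)
  have hℓv : ℓ v = ∑ u : s, c u * ℓ u := by
    rw [hvc, map_sum]
    simp only [map_smul, smul_eq_mul]
  rw [hℓv, ← Finset.sum_coe_sort s fun u => min ((ℓ u / R) ^ 2) 1]
  refine ⟨(abs_sum_mul_le_of_abs_le hR hC.le hcR fun u => hℓ u u.2).trans
    ((le_max_left _ _).trans (le_add_of_nonneg_right zero_le_one)),
    (sq_sum_mul_le_of_abs_le hR hcR fun u => hℓ u u.2).trans
      (mul_le_mul_of_nonneg_right ((le_max_right _ _).trans (le_add_of_nonneg_right zero_le_one))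
        (Finset.sum_nonneg fun u _ => le_min (sq_nonneg _) zero_le_one))⟩

variable {X : Type*} [MeasurableSpace X] {μ : Measure X}
  {V : Type*} [NormedAddCommGroup V] [NormedSpace ℝ V]
  {Θ : Set V} {T : X → V →ₗ[ℝ] ℝ} {h : X → ℝ} {ψ : V → ℝ}

namespace IsRegularExpFamily

theorem integrable_mul_min_sq_one (hF : IsRegularExpFamily μ Θ T h ψ) {w u v : V} (hw : w ∈ Θ)
    (hu : u ∈ Θ) (hv : v ∈ Θ) (R : ℝ) :
    Integrable (fun x => expDensity T h ψ w x * min ((T x (v - u) / R) ^ 2) 1) μ := by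
  rw [← integrableOn_univ]
  refine integrableOn_mul_of_abs_le (b := 1) (hF.isPosDensity w hw)
    ((((hF.measurable_stat hu hv).div_const R).pow_const 2).min measurable_const) .univ
    fun x _ => ?_
  rw [abs_of_nonneg (le_min (sq_nonneg _) zero_le_one)]
  exact min_le_right _ _

theorem exists_integral_min_sq_sub_one_le (hF : IsRegularExpFamily μ Θ T h ψ) :
    ∃ C : ℝ, 0 ≤ C ∧ ∀ w ∈ Θ, ∀ u ∈ Θ, ∀ v ∈ Θ, ∀ R : ℝ, 2 ≤ R →
      ∫ x, expDensity T h ψ w x * min ((T x (v - u) / R) ^ 2) 1 ∂μ ≤ C / R ^ 2 := by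
  obtain ⟨C, hC, hmom⟩ := hF.exists_integral_min_sq_one_le
  refine ⟨4 * C, by positivity, fun w hw u hu v hv R hR => ?_⟩
  have hpt : ∀ x, expDensity T h ψ w x * min ((T x (v - u) / R) ^ 2) 1
      ≤ 2 * (expDensity T h ψ w x * min ((T x (v - w) / R) ^ 2) 1)
        + 2 * (expDensity T h ψ w x * min ((T x (u - w) / R) ^ 2) 1) := fun x => by
    have hle := mul_le_mul_of_nonneg_left
      (min_sub_sq_one_le (T x (v - w) / R) (T x (u - w) / R)) ((hF.isPosDensity w hw).pos x).le
    rw [← sub_div, ← map_sub, sub_sub_sub_cancel_right] at hle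
    linarith
  have hiv := (hF.integrable_mul_min_sq_one hw hw hv R).const_mul 2
  have hiu := (hF.integrable_mul_min_sq_one hw hw hu R).const_mul 2
  calc _ ≤ _ := integral_mono (hF.integrable_mul_min_sq_one hw hu hv R) (hiv.add hiu) hpt
    _ = _ := integral_add hiv hiu
    _ ≤ 2 * (C / R ^ 2) + 2 * (C / R ^ 2) := by
        rw [integral_const_mul, integral_const_mul]
        gcongr
        exacts [hmom w hw v hv R hR, hmom w hw u hu R hR]
    _ = _ := by ring

theorem exists_integral_sum_min_sq_one_le (hF : IsRegularExpFamily μ Θ T h ψ) {s : Finset V}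
    (hs : ↑s ⊆ Set.image2 (· - ·) Θ Θ) :
    ∃ C : ℝ, 0 ≤ C ∧ ∀ w ∈ Θ, ∀ R : ℝ, 2 ≤ R →
      Integrable (fun x => expDensity T h ψ w x * ∑ u ∈ s, min ((T x u / R) ^ 2) 1) μ ∧
      ∫ x, expDensity T h ψ w x * ∑ u ∈ s, min ((T x u / R) ^ 2) 1 ∂μ ≤ C / R ^ 2 := by
  obtain ⟨C, hC, hmom⟩ := hF.exists_integral_min_sq_sub_one_le
  refine ⟨s.card * C, by positivity, fun w hw R hR => ?_⟩
  have hint : ∀ u ∈ s, Integrable (fun x => expDensity T h ψ w x * min ((T x u / R) ^ 2) 1) μ :=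
    fun u hu => by
      obtain ⟨v, hv, v', hv', rfl⟩ := hs hu
      exact hF.integrable_mul_min_sq_one hw hv' hv R
  simp only [Finset.mul_sum]
  refine ⟨integrable_finsetSum _ hint, ?_⟩
  calc _ = ∑ u ∈ s, ∫ x, expDensity T h ψ w x * min ((T x u / R) ^ 2) 1 ∂μ :=
        integral_finsetSum _ hint
    _ ≤ ∑ _u ∈ s, C / R ^ 2 := Finset.sum_le_sum fun u hu => by
        obtain ⟨v, hv, v', hv', rfl⟩ := hs hu
        exact hmom w hw v' hv' v hv R hR
    _ = _ := by rw [Finset.sum_const, nsmul_eq_mul, mul_div_assoc]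

theorem exists_truncation [FiniteDimensional ℝ V] (hF : IsRegularExpFamily μ Θ T h ψ) :
    ∃ C : ℝ, 0 < C ∧ ∀ R : ℝ, 2 ≤ R → ∃ A, MeasurableSet A ∧
      (∀ w ∈ Θ, ∫ x in Aᶜ, expDensity T h ψ w x ∂μ ≤ C / R ^ 2) ∧
      ∀ w ∈ Θ, ∀ z ∈ Θ, ‖z - w‖ ≤ 1 / R →
        (∀ x ∈ A, |T x (z - w)| ≤ C) ∧
        ∫ x in A, expDensity T h ψ w x * T x (z - w) ^ 2 ∂μ ≤ C / R ^ 2 := by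
  obtain ⟨s, hs, C₁, hC₁, hspan⟩ := exists_finset_abs_le_of_mem_span (Set.image2 (· - ·) Θ Θ)
  obtain ⟨C₂, hC₂, hmom⟩ := hF.exists_integral_sum_min_sq_one_le hs
  refine ⟨max (C₁ * C₂) C₂ + C₁, by positivity, fun R hR => ?_⟩
  have hR₀ : 0 < R := by linarith
  set A : Set X := ⋂ u ∈ s, {x | |T x u| ≤ R}
  have hA : MeasurableSet A := s.measurableSet_biInter fun u hu => by
    obtain ⟨v, hv, v', hv', rfl⟩ := hs hu
    exact measurableSet_le (hF.measurable_stat hv' hv).abs measurable_const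
  have hmemA : ∀ {x}, x ∈ A ↔ ∀ u ∈ s, |T x u| ≤ R := by simp [A]
  set M : X → ℝ := fun x => ∑ u ∈ s, min ((T x u / R) ^ 2) 1
  have hM : ∀ x, 0 ≤ M x := fun x =>
    Finset.sum_nonneg fun u _ => le_min (sq_nonneg _) zero_le_one
  refine ⟨A, hA, fun w hw => ?_, fun w hw z hz hzw => ?_⟩ <;>
    obtain ⟨hint, hle⟩ := hmom w hw R hR <;>
    have hpos := (hF.isPosDensity w hw).pos <;>
    have hMnn := fun x => mul_nonneg (hpos x).le (hM x)
  · calc _ ≤ ∫ x, expDensity T h ψ w x * M x ∂μ :=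
          setIntegral_le_integral_of_le_on hA.compl (fun x => (hpos x).le) hMnn hint fun x hx => by
            obtain ⟨u, hu, hRu⟩ : ∃ u ∈ s, R < |T x u| := by simpa [hmemA] using hx
            exact le_mul_of_one_le_right (hpos x).le (one_le_sum_min_sq_one hR₀ hu hRu.le)
      _ ≤ C₂ / R ^ 2 := hle
      _ ≤ _ := by gcongr; linarith [le_max_right (C₁ * C₂) C₂]
  · have hTx := fun x hx => hspan R hR₀ (T x) (hmemA.1 hx) (z - w)
      (Submodule.subset_span ⟨z, hz, w, hw, rfl⟩) hzw
    refine ⟨fun x hx => (hTx x hx).1.trans (le_add_of_nonneg_left (by positivity)), ?_⟩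
    calc _ ≤ ∫ x, C₁ * (expDensity T h ψ w x * M x) ∂μ :=
          setIntegral_le_integral_of_le_on hA (fun x => mul_nonneg (hpos x).le (sq_nonneg _))
            (fun x => mul_nonneg hC₁.le (hMnn x)) (hint.const_mul C₁) fun x hx =>
              (mul_le_mul_of_nonneg_left (hTx x hx).2 (hpos x).le).trans_eq (mul_left_comm _ _ _)
      _ ≤ C₁ * (C₂ / R ^ 2) := by rw [integral_const_mul]; gcongr
      _ ≤ _ := by rw [mul_div_assoc']; gcongr; linarith [le_max_left (C₁ * C₂) C₂]

theorem exists_truncation_log_div [FiniteDimensional ℝ V] (hF : IsRegularExpFamily μ Θ T h ψ) :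
    ∃ C : ℝ, 0 < C ∧ ∀ R : ℝ, 2 ≤ R → ∃ A, MeasurableSet A ∧
      (∀ w ∈ Θ, ∫ x in Aᶜ, expDensity T h ψ w x ∂μ ≤ C / R ^ 2) ∧
      ∀ w ∈ Θ, ∀ z ∈ Θ, ‖z - w‖ ≤ 1 / R →
        (∀ x ∈ A, |Real.log (expDensity T h ψ z x / expDensity T h ψ w x)| ≤ C) ∧
        ∫ x in A, expDensity T h ψ w x
          * Real.log (expDensity T h ψ z x / expDensity T h ψ w x) ^ 2 ∂μ ≤ C / R ^ 2 := by
  obtain ⟨C, hC, htrunc⟩ := hF.exists_truncation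
  obtain ⟨L, hL⟩ := hF.lipschitz
  refine ⟨2 * C + L + 2 * L ^ 2, by positivity, fun R hR => ?_⟩
  have : 0 < R := by linarith
  have hL₀ : 0 ≤ (L : ℝ) := L.2
  obtain ⟨A, hA, hmass, hlocal⟩ := htrunc R hR
  refine ⟨A, hA, fun w hw => (hmass w hw).trans (by gcongr; nlinarith), fun w hw z hz hzw => ?_⟩
  obtain ⟨hT, hTsq⟩ := hlocal w hw z hz hzw
  have hpw := hF.isPosDensity w hw
  have hψ : |ψ z - ψ w| ≤ L / R := by
    have hlip := hL.dist_le_mul z hz w hw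
    rw [Real.dist_eq, dist_eq_norm] at hlip
    exact hlip.trans ((mul_le_mul_of_nonneg_left hzw hL₀).trans_eq (mul_one_div _ _))
  simp only [log_div_expDensity]
  refine ⟨fun x hx => ?_, ?_⟩
  · calc _ ≤ |T x (z - w)| + |ψ z - ψ w| := abs_sub _ _
      _ ≤ C + L := add_le_add (hT x hx) (hψ.trans (div_le_self hL₀ (by linarith)))
      _ ≤ _ := by nlinarith
  have hint : IntegrableOn (fun x => expDensity T h ψ w x * T x (z - w) ^ 2) A μ :=
    integrableOn_mul_of_abs_le (b := C ^ 2) hpw ((hF.measurable_stat hw hz).pow_const 2) hA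
      fun x hx => by rw [abs_pow]; exact pow_le_pow_left₀ (abs_nonneg _) (hT x hx) 2
  calc _ ≤ 2 * ∫ x in A, expDensity T h ψ w x * T x (z - w) ^ 2 ∂μ + 2 * (ψ z - ψ w) ^ 2 :=
        setIntegral_mul_sub_sq_le hpw hint _
    _ ≤ 2 * (C / R ^ 2) + 2 * (L / R) ^ 2 := by
        gcongr 2 * ?_ + 2 * ?_
        exact sq_le_sq' (abs_le.1 hψ).1 (abs_le.1 hψ).2
    _ ≤ _ := by
        rw [div_pow, mul_div_assoc', mul_div_assoc', ← add_div]
        gcongr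
        linarith

theorem exists_truncation_rpow [FiniteDimensional ℝ V] (hF : IsRegularExpFamily μ Θ T h ψ) {r : ℝ}
    (hr : 0 ≤ r) :
    ∃ C : ℝ, 0 < C ∧ ∀ R : ℝ, 2 ≤ R → ∃ A, MeasurableSet A ∧
      (∀ w ∈ Θ, ∫ x in Aᶜ, expDensity T h ψ w x ∂μ ≤ C / R ^ 2) ∧
      ∀ w ∈ Θ, ∀ z ∈ Θ, ‖z - w‖ ≤ 1 / R →
        IntegrableOn (fun x => expDensity T h ψ w x
          * (expDensity T h ψ w x / expDensity T h ψ z x) ^ r) A μ ∧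
        ∫ x in A, expDensity T h ψ w x * (expDensity T h ψ w x / expDensity T h ψ z x) ^ r ∂μ
          ≤ 1 + C / R ^ 2 := by
  obtain ⟨C, hC, htrunc⟩ := hF.exists_truncation_log_div
  set c : ℝ := r * Real.exp C + r ^ 2 * Real.exp (r * C)
  have hc : 0 ≤ c := by positivity
  refine ⟨(1 + r + c) * C, by positivity, fun R hR => ?_⟩
  obtain ⟨A, hA, hmass, hlocal⟩ := htrunc R hR
  refine ⟨A, hA, fun w hw => (hmass w hw).trans ?_, fun w hw z hz hzw => ?_⟩
  · gcongr
    exact le_mul_of_one_le_left hC.le (by linarith)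
  have hpw := hF.isPosDensity w hw
  have hpz := hF.isPosDensity z hz
  obtain ⟨hlog, hsq⟩ := hlocal w hw z hz hzw
  refine ⟨integrableOn_mul_div_rpow hpw hpz hA hr hlog,
    (setIntegral_mul_div_rpow_le hpw hpz hA hr hlog).trans ?_⟩
  calc _ ≤ 1 + r * (C / R ^ 2) + c * (C / R ^ 2) := by gcongr; exact hmass z hz
    _ ≤ 1 + (1 + r + c) * (C / R ^ 2) := by linarith [show 0 ≤ C / R ^ 2 by positivity]
    _ = _ := by rw [mul_div_assoc]

end IsRegularExpFamily

end Truncation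

section RealInequalities

variable {lam : ℝ}

theorem mul_div_rpow_of_rpow_mul_rpow_eq (hlam : 0 < lam) {a b c d G : ℝ} (ha : 0 < a) (hb : 0 < b)
    (hc : 0 < c) (hd : 0 < d) (hG : 0 < G) (h : a ^ lam * b ^ (1 - lam) = G * c) :
    a * (b / d) ^ ((1 - lam) / lam) = G ^ (1 / lam) * (c * (c / d) ^ ((1 - lam) / lam)) := by
  set r := (1 - lam) / lam with hr
  have hpow := congrArg (· ^ (1 / lam)) h
  simp only [Real.mul_rpow (Real.rpow_nonneg ha.le _) (Real.rpow_nonneg hb.le _),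
    Real.mul_rpow hG.le hc.le, ← Real.rpow_mul ha.le, ← Real.rpow_mul hb.le, mul_one_div,
    div_self hlam.ne', Real.rpow_one, ← hr] at hpow
  have hc₁ : c * c ^ r = c ^ (1 / lam) := by
    rw [← Real.rpow_one_add' hc.le (by rw [hr]; field_simp; simpa using hlam.ne'), hr]
    congr 1
    field_simp
    ring
  rw [Real.div_rpow hb.le hd.le, Real.div_rpow hc.le hd.le, mul_div_assoc', mul_div_assoc', hpow,
    hc₁, mul_div_assoc']

theorem inv_one_sub_le_exp {m : ℝ} (hm₀ : 0 ≤ m) (hm : m ≤ 1 / 2) :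
    (1 - m)⁻¹ ≤ Real.exp (2 * m) := by
  have hexp := Real.add_one_le_exp (2 * m)
  rw [inv_le_comm₀ (by linarith) (Real.exp_pos _), inv_le_iff_one_le_mul₀ (Real.exp_pos _)]
  nlinarith

/- With `1 - m` replaced by one and the two terms in `m` dropped, the claim reads
`G ^ (1 / lam) ≤ I ^ (1 / lam)`. -/
theorem inv_one_sub_rpow_mul_add_le {m G I B r : ℝ} (hlam : 0 < lam) (hr : 0 ≤ r) (hm₀ : 0 ≤ m)
    (hm : m ≤ 1 / 2) (hI : 0 < I) (hG : Real.exp (-B) ≤ G) (hGI : (1 - m) ^ 2 * G ≤ I) :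
    (1 - m)⁻¹ ^ r * (G ^ (1 / lam) * (1 + m)) + m
      ≤ I ^ (1 / lam) * Real.exp ((2 * r + 1 + Real.exp (B / lam) + 4 / lam) * m) := by
  set E := G ^ (1 / lam)
  have hG₀ : 0 < G := (Real.exp_pos _).trans_le hG
  have hinv := inv_one_sub_le_exp hm₀ hm
  have hρ : 0 < 1 - m := by linarith
  have hρr : (1 - m)⁻¹ ^ r ≤ Real.exp (2 * r * m) := by
    refine (Real.rpow_le_rpow (by positivity) hinv hr).trans_eq ?_
    rw [← Real.exp_mul]
    ring_nf
  have hm' : m ≤ E * (Real.exp (B / lam) * m) := by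
    have hE : Real.exp (-(B / lam)) ≤ E := by
      refine (Real.rpow_le_rpow (Real.exp_pos _).le hG (by positivity)).trans_eq' ?_
      rw [← Real.exp_mul]
      ring_nf
    calc m = Real.exp (-(B / lam)) * (Real.exp (B / lam) * m) := by
          rw [← mul_assoc, ← Real.exp_add, neg_add_cancel, Real.exp_zero, one_mul]
      _ ≤ _ := by gcongr
  have hEI : E ≤ I ^ (1 / lam) * Real.exp (4 / lam * m) := by
    have hGI' : G ≤ I * Real.exp (4 * m) := by
      calc G = (1 - m) ^ 2 * G * (1 - m)⁻¹ ^ 2 := by field_simp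
        _ ≤ I * Real.exp (2 * m) ^ 2 := by gcongr
        _ = _ := by rw [← Real.exp_nat_mul]; ring_nf
    refine (Real.rpow_le_rpow hG₀.le hGI' (by positivity)).trans_eq ?_
    rw [Real.mul_rpow hI.le (Real.exp_pos _).le, ← Real.exp_mul]
    ring_nf
  have hexp : 1 ≤ Real.exp (2 * r * m) := Real.one_le_exp (by positivity)
  calc _ ≤ Real.exp (2 * r * m) * (E * (1 + m))
          + Real.exp (2 * r * m) * (E * (Real.exp (B / lam) * m)) := by
        gcongr
        exact hm'.trans (le_mul_of_one_le_left (by positivity) hexp)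
    _ = E * (Real.exp (2 * r * m) * ((1 + Real.exp (B / lam)) * m + 1)) := by ring
    _ ≤ I ^ (1 / lam) * Real.exp (4 / lam * m)
          * (Real.exp (2 * r * m) * Real.exp ((1 + Real.exp (B / lam)) * m)) := by
        gcongr
        exact Real.add_one_le_exp _
    _ = _ := by
        rw [mul_assoc, ← Real.exp_add, ← Real.exp_add]
        ring_nf

end RealInequalities

section SpliceComparison

variable {X : Type*} [MeasurableSpace X] {μ : Measure X} {A : Set X} {p₀ s θ w z : X → ℝ}
  {lam m G : ℝ}

theorem le_renyiAffinity_splice (hA : MeasurableSet A) (h₀ : 0 ≤ lam) (h₁ : lam ≤ 1) (hm₀ : 0 ≤ m)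
    (hm : m < 1) (hG : 0 ≤ G) (hp₀ : IsPosDensity μ p₀) (hs : IsPosDensity μ s)
    (hθ : IsPosDensity μ θ) (hw : IsPosDensity μ w) (hp₀A : ∫ x in Aᶜ, p₀ x ∂μ ≤ m)
    (hθA : ∫ x in Aᶜ, θ x ∂μ ≤ m) (hwA : ∫ x in Aᶜ, w x ∂μ ≤ m)
    (htilt : ∀ x, s x ^ lam * θ x ^ (1 - lam) = G * w x) :
    (1 - m) ^ 2 * G ≤ renyiAffinity μ lam s (splice μ A p₀ θ) := by
  have hmass := fun {q : X → ℝ} (hq : IsPosDensity μ q) => hq.setIntegral_add_compl hA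
  have hρ : 0 < 1 - m := by linarith
  have hp₀A' : 1 - m ≤ ∫ x in A, p₀ x ∂μ := by linarith [hmass hp₀]
  have hθ₀ : 0 < ∫ x in A, θ x ∂μ := by linarith [hmass hθ]
  have hq := isPosDensity_splice hA hp₀ hθ (hρ.trans_le hp₀A') hθ₀
  have hratio : 1 - m ≤ (∫ x in A, p₀ x ∂μ) / ∫ x in A, θ x ∂μ :=
    hp₀A'.trans (le_div_self (by linarith) hθ₀ (hθ.setIntegral_le_one A))
  have hpt : ∀ x ∈ A, (1 - m) * G * w x ≤ s x * (splice μ A p₀ θ x / s x) ^ (1 - lam) :=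
    fun x hx => by
    rw [mul_div_rpow_one_sub (hs.pos x) (hq.pos x).le, splice_of_mem hx,
      Real.mul_rpow (hρ.le.trans hratio) (hθ.pos x).le, mul_left_comm, htilt, mul_assoc]
    refine mul_le_mul_of_nonneg_right ?_ (mul_nonneg hG (hw.pos x).le)
    calc 1 - m ≤ (1 - m) ^ (1 - lam) :=
          Real.self_le_rpow_of_le_one hρ.le (by linarith) (by linarith)
      _ ≤ _ := Real.rpow_le_rpow hρ.le hratio (by linarith)
  calc (1 - m) ^ 2 * G = (1 - m) * G * (1 - m) := by ring
    _ ≤ (1 - m) * G * ∫ x in A, w x ∂μ := by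
        gcongr
        linarith [hmass hw]
    _ = ∫ x in A, (1 - m) * G * w x ∂μ := (integral_const_mul _ _).symm
    _ ≤ _ := setIntegral_le_integral_of_le_on hA
        (fun x => mul_nonneg (by positivity) (hw.pos x).le)
        (fun x => mul_nonneg (hs.pos x).le (Real.rpow_nonneg
          (div_nonneg (hq.pos x).le (hs.pos x).le) _))
        (integrable_renyiAffinity h₀ h₁ hs hq) hpt

theorem mul_splice_div_splice_rpow_of_mem (hlam : 0 < lam) (hG : 0 < G)
    (hs : IsPosDensity μ s) (hθ : IsPosDensity μ θ) (hw : IsPosDensity μ w) (hz : IsPosDensity μ z)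
    (hp₀A : 0 < ∫ x in A, p₀ x ∂μ) (hθA : 0 < ∫ x in A, θ x ∂μ) (hzA : 0 < ∫ x in A, z x ∂μ)
    (htilt : ∀ x, s x ^ lam * θ x ^ (1 - lam) = G * w x) {x : X} (hx : x ∈ A) :
    s x * (splice μ A p₀ θ x / splice μ A p₀ z x) ^ ((1 - lam) / lam)
      = ((∫ x in A, z x ∂μ) / ∫ x in A, θ x ∂μ) ^ ((1 - lam) / lam)
        * (G ^ (1 / lam) * (w x * (w x / z x) ^ ((1 - lam) / lam))) := by
  have hcancel : splice μ A p₀ θ x / splice μ A p₀ z x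
      = (∫ x in A, z x ∂μ) / (∫ x in A, θ x ∂μ) * (θ x / z x) := by
    rw [splice_of_mem hx, splice_of_mem hx]
    have := (hz.pos x).ne'
    field_simp
  rw [hcancel, Real.mul_rpow (div_pos hzA hθA).le (div_pos (hθ.pos x) (hz.pos x)).le,
    mul_left_comm,
    mul_div_rpow_of_rpow_mul_rpow_eq hlam (hs.pos x) (hθ.pos x) (hw.pos x) (hz.pos x) hG (htilt x)]

theorem integral_mul_splice_div_rpow_le (hA : MeasurableSet A) (hlam : 0 < lam) (h₁ : lam ≤ 1)
    (hm : m < 1) (hG : 0 < G) (hp₀ : IsPosDensity μ p₀) (hs : IsPosDensity μ s)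
    (hθ : IsPosDensity μ θ) (hw : IsPosDensity μ w) (hz : IsPosDensity μ z)
    (hp₀A : ∫ x in Aᶜ, p₀ x ∂μ ≤ m) (hsA : ∫ x in Aᶜ, s x ∂μ ≤ m) (hθA : ∫ x in Aᶜ, θ x ∂μ ≤ m)
    (hzA : ∫ x in Aᶜ, z x ∂μ ≤ m)
    (htilt : ∀ x, s x ^ lam * θ x ^ (1 - lam) = G * w x)
    (hint : IntegrableOn (fun x => w x * (w x / z x) ^ ((1 - lam) / lam)) A μ)
    (hle : ∫ x in A, w x * (w x / z x) ^ ((1 - lam) / lam) ∂μ ≤ 1 + m) :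
    Integrable (fun x => s x * (splice μ A p₀ θ x / splice μ A p₀ z x) ^ ((1 - lam) / lam)) μ ∧
    ∫ x, s x * (splice μ A p₀ θ x / splice μ A p₀ z x) ^ ((1 - lam) / lam) ∂μ
      ≤ (1 - m)⁻¹ ^ ((1 - lam) / lam) * (G ^ (1 / lam) * (1 + m)) + m := by
  have hr : 0 ≤ (1 - lam) / lam := div_nonneg (sub_nonneg.2 h₁) hlam.le
  have hmass : ∀ {q : X → ℝ}, IsPosDensity μ q → ∫ x in Aᶜ, q x ∂μ ≤ m →
      1 - m ≤ ∫ x in A, q x ∂μ := fun hq h => by linarith [hq.setIntegral_add_compl hA]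
  have hmass₀ : ∀ {q : X → ℝ}, IsPosDensity μ q → ∫ x in Aᶜ, q x ∂μ ≤ m →
      0 < ∫ x in A, q x ∂μ := fun hq h => (sub_pos.2 hm).trans_le (hmass hq h)
  set r := (1 - lam) / lam
  set c := (∫ x in A, z x ∂μ) / ∫ x in A, θ x ∂μ
  have hc : 0 ≤ c := (div_pos (hmass₀ hz hzA) (hmass₀ hθ hθA)).le
  have hc' : c ≤ (1 - m)⁻¹ := by
    rw [← one_div]
    exact div_le_div₀ zero_le_one (hz.setIntegral_le_one A) (sub_pos.2 hm) (hmass hθ hθA)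
  have hon : Set.EqOn (fun x => s x * (splice μ A p₀ θ x / splice μ A p₀ z x) ^ r)
      (fun x => c ^ r * (G ^ (1 / lam) * (w x * (w x / z x) ^ r))) A := fun x hx =>
    mul_splice_div_splice_rpow_of_mem hlam hG hs hθ hw hz (hmass₀ hp₀ hp₀A) (hmass₀ hθ hθA)
      (hmass₀ hz hzA) htilt hx
  have hoff : Set.EqOn (fun x => s x * (splice μ A p₀ θ x / splice μ A p₀ z x) ^ r) s Aᶜ :=
    fun x hx => by
    simp only [splice_of_mem_compl hx, div_self (hp₀.pos x).ne', Real.one_rpow, mul_one]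
  have hiA := IntegrableOn.congr_fun (Integrable.const_mul (Integrable.const_mul hint _) _)
    hon.symm hA
  have hiAc := hs.integrable.integrableOn.congr_fun hoff.symm hA.compl
  have hi := integrableOn_univ.1 (Set.union_compl_self A ▸ hiA.union hiAc)
  refine ⟨hi, ?_⟩
  rw [← integral_add_compl hA hi, setIntegral_congr_fun hA hon, setIntegral_congr_fun hA.compl hoff,
    integral_const_mul, integral_const_mul]
  have hw₀ : 0 ≤ ∫ x in A, w x * (w x / z x) ^ r ∂μ := integral_nonneg fun x =>
    mul_nonneg (hw.pos x).le (Real.rpow_nonneg (div_pos (hw.pos x) (hz.pos x)).le _)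
  gcongr

end SpliceComparison

section TruncatedFamily

variable {X : Type*} [MeasurableSpace X] {μ : Measure X} {V : Type*} [NormedAddCommGroup V]
  [NormedSpace ℝ V] {Θ : Set V} {T : X → V →ₗ[ℝ] ℝ} {h : X → ℝ} {ψ : V → ℝ} {lam : ℝ}

theorem IsRegularExpFamily.exists_exp_neg_le_exp_tilt (hF : IsRegularExpFamily μ Θ T h ψ)
    (h₀ : 0 ≤ lam) (h₁ : lam ≤ 1) :
    ∃ B : ℝ, ∀ s ∈ Θ, ∀ θ ∈ Θ, Real.exp (-B)
      ≤ Real.exp (ψ (s + (1 - lam) • (θ - s)) - lam * ψ s - (1 - lam) * ψ θ) := by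
  obtain ⟨L, hL⟩ := hF.lipschitz
  obtain ⟨b, hb⟩ := hF.isCompact.exists_bound_of_continuousOn hL.continuousOn
  refine ⟨2 * b, fun s hs θ hθ => Real.exp_le_exp.2 ?_⟩
  have hlow := (abs_le.1 (hb _ (hF.convex.add_smul_sub_mem hs hθ
    ⟨sub_nonneg.2 h₁, sub_le_self 1 h₀⟩))).1
  have hup₁ := mul_le_mul_of_nonneg_left (abs_le.1 (hb s hs)).2 h₀
  have hup₂ := mul_le_mul_of_nonneg_left (abs_le.1 (hb θ hθ)).2 (sub_nonneg.2 h₁)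
  linarith

/- The competitor `z` of `θ` is close to the parameter of the geometric mixture of `s` and `θ`, the
density towards which a large deviation in favour of `θ` under `s` tilts `s`. -/
theorem IsRegularExpFamily.exists_truncated_family [FiniteDimensional ℝ V]
    (hF : IsRegularExpFamily μ Θ T h ψ) (hΘ : Θ.Nonempty) (hlam : 0 < lam) (h₁ : lam ≤ 1) :
    ∃ C R₀ : ℝ, ∀ R : ℝ, R₀ ≤ R → ∃ q : V → X → ℝ, (∀ θ ∈ Θ, IsPosDensity μ (q θ)) ∧
      ∀ s ∈ Θ, ∀ θ ∈ Θ, ∀ z ∈ Θ, ‖z - (s + (1 - lam) • (θ - s))‖ ≤ 1 / R →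
        Integrable (fun x => expDensity T h ψ s x * (q θ x / q z x) ^ ((1 - lam) / lam)) μ ∧
        0 < renyiAffinity μ lam (expDensity T h ψ s) (q θ) ∧
        ∫ x, expDensity T h ψ s x * (q θ x / q z x) ^ ((1 - lam) / lam) ∂μ
          ≤ renyiAffinity μ lam (expDensity T h ψ s) (q θ) ^ (1 / lam) * Real.exp (C / R ^ 2) := by
  obtain ⟨θ₀, hθ₀⟩ := hΘ
  set r := (1 - lam) / lam
  have hr : 0 ≤ r := div_nonneg (sub_nonneg.2 h₁) hlam.le
  obtain ⟨C, hC, htrunc⟩ := hF.exists_truncation_rpow hr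
  obtain ⟨B, hB⟩ := hF.exists_exp_neg_le_exp_tilt hlam.le h₁
  refine ⟨(2 * r + 1 + Real.exp (B / lam) + 4 / lam) * C, max 2 C, fun R hR => ?_⟩
  obtain ⟨hR₂, hRC⟩ := max_le_iff.1 hR
  obtain ⟨A, hA, hmass, hlocal⟩ := htrunc R hR₂
  set m := C / R ^ 2
  have hm₀ : 0 ≤ m := by positivity
  have hm : m ≤ 1 / 2 := by
    rw [div_le_iff₀ (by positivity)]
    nlinarith
  have hmass₀ : ∀ θ ∈ Θ, 0 < ∫ x in A, expDensity T h ψ θ x ∂μ := fun θ hθ => by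
    linarith [hmass θ hθ, (hF.isPosDensity θ hθ).setIntegral_add_compl hA]
  have hq : ∀ θ ∈ Θ, IsPosDensity μ (splice μ A (expDensity T h ψ θ₀) (expDensity T h ψ θ)) :=
    fun θ hθ => isPosDensity_splice hA (hF.isPosDensity θ₀ hθ₀) (hF.isPosDensity θ hθ)
      (hmass₀ θ₀ hθ₀) (hmass₀ θ hθ)
  refine ⟨fun θ => splice μ A (expDensity T h ψ θ₀) (expDensity T h ψ θ), hq,
    fun s hs θ hθ z hz hzw => ?_⟩
  set w := s + (1 - lam) • (θ - s)
  have hw : w ∈ Θ := hF.convex.add_smul_sub_mem hs hθ ⟨sub_nonneg.2 h₁, by linarith⟩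
  have htilt := expDensity_rpow_mul_rpow (T := T) (h := h) (ψ := ψ) lam s θ
  obtain ⟨hintA, hleA⟩ := hlocal w hw z hz hzw
  have hd := hF.isPosDensity
  have hlow := le_renyiAffinity_splice hA hlam.le h₁ hm₀ (by linarith) (Real.exp_pos _).le
    (hd θ₀ hθ₀) (hd s hs) (hd θ hθ) (hd w hw) (hmass θ₀ hθ₀) (hmass θ hθ) (hmass w hw) htilt
  have hI := (mul_pos (pow_pos (show 0 < 1 - m by linarith) 2) (Real.exp_pos _)).trans_le hlow
  obtain ⟨hint, hle⟩ := integral_mul_splice_div_rpow_le hA hlam h₁ (show m < 1 by linarith)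
    (Real.exp_pos _) (hd θ₀ hθ₀) (hd s hs) (hd θ hθ) (hd w hw) (hd z hz) (hmass θ₀ hθ₀)
    (hmass s hs) (hmass θ hθ) (hmass z hz) htilt hintA hleA
  refine ⟨hint, hI, (hle.trans
    (inv_one_sub_rpow_mul_add_le hlam hr hm₀ hm hI (hB s hs θ hθ) hlow)).trans_eq ?_⟩
  rw [mul_div_assoc]

end TruncatedFamily

section SelectionCodes

variable {X : Type*} [MeasurableSpace X] {μ : Measure X} {lam k : ℝ}

/-- A code for which every codeword `q i` has a competitor `q j` such that, under each density of
`P`, `n` independent observations favour `q i` over `q j` with a probability that is exponentially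
small in `n` times the Rényi divergence of `q i`. -/
structure IsSelectionCode (μ : Measure X) (lam : ℝ) (n : ℕ) (C : ℝ) (P : Set (X → ℝ)) {ι : Type*}
    (q : ι → X → ℝ) : Prop where
  nonneg : ∀ i x, 0 ≤ q i x
  measurable : ∀ i, Measurable (q i)
  integral_eq_one : ∀ i, ∫ x, q i x ∂μ = 1
  exists_competitor : ∀ p ∈ P, ∀ i, ∃ j,
    ∫ x in {x : Fin n → X | -Real.log (∏ t, q i (x t)) ≤ -Real.log (∏ t, q j (x t))},
        ∏ t, p (x t) ∂(Measure.pi fun _ => μ)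
      ≤ C * Real.exp (-((1 - lam) / lam * n * renyiDiv μ lam p (q i)))

/-- For large `n`, the set `P` of densities has a selection code of `O(n ^ k)` codewords. -/
def HasSelectionCodes (μ : Measure X) (lam k : ℝ) (P : Set (X → ℝ)) : Prop :=
  ∃ C : ℝ, 0 ≤ C ∧ ∀ᶠ n : ℕ in Filter.atTop, ∃ (ι : Type) (_ : Fintype ι) (_ : Nonempty ι)
    (q : ι → X → ℝ), (Fintype.card ι : ℝ) ≤ C * (n : ℝ) ^ k ∧ IsSelectionCode μ lam n C P q

theorem renyiDiv_congr_ae {p p' : X → ℝ} (hpp' : p =ᵐ[μ] p') (q : X → ℝ) :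
    renyiDiv μ lam p q = renyiDiv μ lam p' q := by
  rw [renyiDiv, renyiDiv]
  congr 2
  exact integral_congr_ae (hpp'.mono fun x hx => by simp only [hx])

theorem prod_congr_ae_pi [SigmaFinite μ] {ι : Type*} [Fintype ι] {p p' : X → ℝ}
    (hpp' : p =ᵐ[μ] p') :
    (fun x : ι → X => ∏ t, p (x t)) =ᵐ[Measure.pi fun _ => μ] fun x => ∏ t, p' (x t) :=
  (Measure.ae_eq_pi fun _ => hpp').mono fun _ hx =>
    Finset.prod_congr rfl fun t _ => congrFun hx t

theorem HasSelectionCodes.of_ae_eq [SigmaFinite μ] {P P' : Set (X → ℝ)}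
    (hP : HasSelectionCodes μ lam k P) (hPP' : ∀ p ∈ P', ∃ p' ∈ P, p =ᵐ[μ] p') :
    HasSelectionCodes μ lam k P' := by
  obtain ⟨C, hC₀, hC⟩ := hP
  refine ⟨C, hC₀, hC.mono fun n ⟨ι, hι, hne, q, hcard, hq⟩ => ⟨ι, hι, hne, q, hcard, hq.nonneg,
    hq.measurable, hq.integral_eq_one, fun p hp i => ?_⟩⟩
  obtain ⟨p', hp', hae⟩ := hPP' p hp
  obtain ⟨j, hj⟩ := hq.exists_competitor p' hp' i
  refine ⟨j, ?_⟩
  rwa [renyiDiv_congr_ae hae, integral_congr_ae (ae_restrict_of_ae (prod_congr_ae_pi hae))]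

theorem renyiDiv_self {p : X → ℝ} (hp : ∫ x, p x ∂μ = 1) : renyiDiv μ lam p p = 0 := by
  have hpt : ∀ x, p x * (p x / p x) ^ (1 - lam) = p x := fun x => by
    rcases eq_or_ne (p x) 0 with hx | hx
    · rw [hx, zero_mul]
    · rw [div_self hx, Real.one_rpow, mul_one]
  simp only [renyiDiv, hpt, hp, Real.log_one, mul_zero]

theorem hasSelectionCodes_singleton [SigmaFinite μ] {p : X → ℝ} (hk : 0 ≤ k)
    (hp₀ : ∀ x, 0 ≤ p x) (hpm : Measurable p) (hp : ∫ x, p x ∂μ = 1) :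
    HasSelectionCodes μ lam k {p} := by
  refine ⟨1, zero_le_one, (Filter.eventually_ge_atTop 1).mono fun n hn =>
    ⟨Unit, inferInstance, inferInstance, fun _ => p, ?_, fun _ => hp₀, fun _ => hpm,
      fun _ => hp, fun p' hp' i => ⟨i, ?_⟩⟩⟩
  · rw [Fintype.card_unit, Nat.cast_one, one_mul]
    exact Real.one_le_rpow (Nat.one_le_cast.2 hn) hk
  · rw [Set.mem_singleton_iff.1 hp', renyiDiv_self hp]
    simp only [le_refl, Set.ofPred_true, Measure.restrict_univ, mul_zero, neg_zero, Real.exp_zero,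
      integral_fintype_prod_eq_prod (f := fun _ => p), hp, Finset.prod_const_one, mul_one]

theorem IsRegularExpFamily.hasSelectionCodes [SigmaFinite μ] {ι : Type} [Fintype ι]
    {Θ : Set (ι → ℝ)} {T : X → (ι → ℝ) →ₗ[ℝ] ℝ} {h : X → ℝ} {ψ : (ι → ℝ) → ℝ}
    (hF : IsRegularExpFamily μ Θ T h ψ) (hΘ : Θ.Nonempty) (hlam : 0 < lam) (h₁ : lam < 1) :
    HasSelectionCodes μ lam (Fintype.card ι / 2) (expDensity T h ψ '' Θ) := by
  obtain ⟨C, R₀, hfam⟩ := hF.exists_truncated_family hΘ hlam h₁.le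
  obtain ⟨c, hc, hnet⟩ := exists_finset_cover_card_le hF.isCompact.isBounded
  have hlarge : ∀ᶠ n : ℕ in Filter.atTop, max 1 R₀ ≤ √(n : ℝ) :=
    (Real.tendsto_sqrt_atTop.comp tendsto_natCast_atTop_atTop).eventually_ge_atTop _
  refine ⟨max c (Real.exp C), le_max_of_le_left hc.le, hlarge.mono fun n hn => ?_⟩
  obtain ⟨hn₁, hn₀⟩ := max_le_iff.1 hn
  obtain ⟨q, hq, hcomp⟩ := hfam _ hn₀
  obtain ⟨N, hNΘ, hcard, hcover⟩ := hnet _ hn₁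
  have hNne : Nonempty N := by
    obtain ⟨θ₀, hθ₀⟩ := hΘ
    obtain ⟨z, hz, -⟩ := hcover θ₀ hθ₀
    exact ⟨z, hz⟩
  have hn : (0 : ℝ) < n := Real.sqrt_pos.1 (one_pos.trans_le hn₁)
  refine ⟨N, inferInstance, hNne, fun θ => q θ, ?_, fun θ x => ((hq θ (hNΘ θ.2)).pos x).le,
    fun θ => (hq θ (hNΘ θ.2)).measurable, fun θ => (hq θ (hNΘ θ.2)).integral_eq_one, ?_⟩
  · rw [Fintype.card_coe]
    refine hcard.trans ?_
    rw [Real.sqrt_eq_rpow, ← Real.rpow_mul_natCast hn.le, one_div_mul_eq_div]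
    gcongr
    exact le_max_left _ _
  · rintro _ ⟨s, hs, rfl⟩ ⟨θ, hθN⟩
    have hθ := hNΘ hθN
    obtain ⟨z, hzN, hz⟩ := hcover (s + (1 - lam) • (θ - s))
      (hF.convex.add_smul_sub_mem hs hθ ⟨by linarith, by linarith⟩)
    obtain ⟨hint, hI, hle⟩ := hcomp s hs θ hθ z (hNΘ hzN) hz
    refine ⟨⟨z, hzN⟩, ?_⟩
    have hps := (hF.isPosDensity s hs).pos
    have hqθ := hq θ hθ
    have hqz := hq z (hNΘ hzN)
    calc _ ≤ _ := setIntegral_prod_le_pow (div_nonneg (by linarith) hlam.le)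
            (fun x => (hps x).le) hqθ.pos hqz.pos hqθ.measurable hqz.measurable hint
      _ ≤ (renyiAffinity μ lam (expDensity T h ψ s) (q θ) ^ (1 / lam)
            * Real.exp (C / √n ^ 2)) ^ n := by
          rw [Fintype.card_fin]
          exact pow_le_pow_left₀ (integral_nonneg fun x => mul_nonneg (hps x).le
            (Real.rpow_nonneg (div_pos (hqθ.pos x) (hqz.pos x)).le _)) hle n
      _ = Real.exp C * Real.exp (-((1 - lam) / lam * n
            * renyiDiv μ lam (expDensity T h ψ s) (q θ))) := by
          rw [rpow_renyiAffinity h₁ hI, ← Real.exp_add, ← Real.exp_nat_mul, ← Real.exp_add,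
            Real.sq_sqrt hn.le]
          congr 1
          field_simp
          ring
      _ ≤ _ := by gcongr; exact le_max_right _ _

end SelectionCodes

section MeasurableArgmin

theorem exists_measurable_argmin {Ω ι : Type*} [MeasurableSpace Ω] [Finite ι] [Nonempty ι]
    {f : ι → Ω → ℝ} (hf : ∀ i, Measurable (f i)) :
    ∃ est : Ω → ι, (∀ i, MeasurableSet (est ⁻¹' {i})) ∧ ∀ x i, f (est x) x ≤ f i x := by
  classical
  obtain ⟨m, ⟨e⟩⟩ := Finite.exists_equiv_fin ι
  have hmin : ∀ x, ∃ N : ℕ, ∃ i, (e i : ℕ) = N ∧ ∀ j, f i x ≤ f j x := fun x =>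
    (Finite.exists_min (f · x)).elim fun i hi => ⟨e i, i, rfl, hi⟩
  have hmeas : ∀ N : ℕ, MeasurableSet {x | ∃ i, (e i : ℕ) = N ∧ ∀ j, f i x ≤ f j x} := fun N => by
    simp only [Set.ofPred_exists, Set.ofPred_and, Set.ofPred_forall]
    exact .iUnion fun i => (MeasurableSet.const _).inter
      (.iInter fun j => measurableSet_le (hf i) (hf j))
  have hfind := measurable_find hmin hmeas
  choose est hest hle using fun x => Nat.find_spec (hmin x)
  refine ⟨est, fun i => ?_, hle⟩
  have hfiber : est ⁻¹' {i} = (fun x => Nat.find (hmin x)) ⁻¹' {(e i : ℕ)} := by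
    ext x
    simp only [Set.mem_preimage, Set.mem_singleton_iff, ← hest, Fin.val_inj, e.injective.eq_iff]
  rw [hfiber]
  exact hfind (measurableSet_singleton _)

variable {Ω ι : Type*} [MeasurableSpace Ω] {ν : Measure Ω} {g : Ω → ℝ} {est : Ω → ι}

theorem integral_mul_comp_eq_sum [Fintype ι] (hg : Integrable g ν)
    (hest : ∀ i, MeasurableSet (est ⁻¹' {i})) (h : ι → ℝ) :
    ∫ x, g x * h (est x) ∂ν = ∑ i, h i * ∫ x in est ⁻¹' {i}, g x ∂ν := by
  have hfiber : ∀ i, Set.EqOn (fun x => h i * g x) (fun x => g x * h (est x)) (est ⁻¹' {i}) :=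
    fun i x hx => by
      simp only [Set.mem_singleton_iff.1 (Set.mem_preimage.1 hx), mul_comm]
  have hunion : ⋃ i, est ⁻¹' {i} = Set.univ := by
    rw [← Set.preimage_iUnion, Set.iUnion_of_singleton, Set.preimage_univ]
  rw [← setIntegral_univ, ← hunion, integral_iUnion_fintype hest
    (fun i j hij => (Set.disjoint_singleton.2 hij).preimage est)
    fun i => (hg.const_mul (h i)).integrableOn.congr_fun (hfiber i) (hest i)]
  exact Finset.sum_congr rfl fun i _ => by
    rw [← setIntegral_congr_fun (hest i) (hfiber i), integral_const_mul]

theorem setIntegral_preimage_eq_sum (hg : Integrable g ν)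
    (hest : ∀ i, MeasurableSet (est ⁻¹' {i})) (s : Finset ι) :
    ∫ x in est ⁻¹' s, g x ∂ν = ∑ i ∈ s, ∫ x in est ⁻¹' {i}, g x ∂ν := by
  rw [← integral_biUnion_finset s (fun i _ => hest i)
    (fun i _ j _ hij => (Set.disjoint_singleton.2 hij).preimage est) fun i _ => hg.integrableOn,
    ← Set.preimage_iUnion₂]
  congr
  exact (Set.biUnion_of_singleton (s : Set ι)).symm

end MeasurableArgmin

section ExponentialTails

variable {ι : Type*} [Fintype ι] {D W : ι → ℝ} {C κ : ℝ}

theorem sum_mul_le_of_le_exp (hκ : 0 < κ) (hW₀ : ∀ i, 0 ≤ W i) (hW₁ : ∑ i, W i = 1)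
    (hW : ∀ i, W i ≤ C * Real.exp (-(κ * D i))) (s : ℝ) :
    ∑ i, D i * W i ≤ s + Fintype.card ι * (C * Real.exp (-(κ * s)) / κ) := by
  have hterm : ∀ i, (D i - s) * W i ≤ C * Real.exp (-(κ * s)) / κ := fun i => by
    have hC : 0 ≤ C := nonneg_of_mul_nonneg_left ((hW₀ i).trans (hW i)) (Real.exp_pos _)
    rcases le_total (D i) s with hs | -
    · exact (mul_nonpos_of_nonpos_of_nonneg (sub_nonpos.2 hs) (hW₀ i)).trans (by positivity)
    have hgap : D i - s ≤ Real.exp (κ * (D i - s)) / κ := by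
      rw [le_div_iff₀ hκ]
      linarith [Real.add_one_le_exp (κ * (D i - s))]
    calc _ ≤ Real.exp (κ * (D i - s)) / κ * (C * Real.exp (-(κ * D i))) :=
          mul_le_mul hgap (hW i) (hW₀ i) (by positivity)
      _ = C * (Real.exp (κ * (D i - s)) * Real.exp (-(κ * D i))) / κ := by ring
      _ = _ := by
          rw [← Real.exp_add]
          ring_nf
  calc ∑ i, D i * W i = s * ∑ i, W i + ∑ i, (D i - s) * W i := by
        rw [Finset.mul_sum, ← Finset.sum_add_distrib]
        exact Finset.sum_congr rfl fun i _ => by ring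
    _ ≤ s * 1 + ∑ _i : ι, C * Real.exp (-(κ * s)) / κ := by
        rw [hW₁]
        gcongr with i
        exact hterm i
    _ = _ := by rw [mul_one, Finset.sum_const, nsmul_eq_mul, Finset.card_univ]

theorem sum_filter_lt_le_of_le_exp [Nonempty ι] (hκ : 0 ≤ κ) (hW₀ : ∀ i, 0 ≤ W i)
    (hW : ∀ i, W i ≤ C * Real.exp (-(κ * D i))) (t : ℝ) :
    ∑ i with t < D i, W i ≤ Fintype.card ι * (C * Real.exp (-(κ * t))) := by
  obtain ⟨i₀⟩ := ‹Nonempty ι›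
  have hC : 0 ≤ C := nonneg_of_mul_nonneg_left ((hW₀ i₀).trans (hW i₀)) (Real.exp_pos _)
  calc _ ≤ ∑ i with t < D i, C * Real.exp (-(κ * t)) := by
        refine Finset.sum_le_sum fun i hi => (hW i).trans ?_
        have := (Finset.mem_filter.1 hi).2.le
        gcongr
    _ ≤ ∑ _i : ι, C * Real.exp (-(κ * t)) :=
        Finset.sum_le_univ_sum_of_nonneg fun _ => by positivity
    _ = _ := by rw [Finset.sum_const, nsmul_eq_mul, Finset.card_univ]

theorem eventually_mul_rpow_mul_exp_le {k α γ c : ℝ} {REG : ℕ → ℝ} (hk : 0 < k) (hγ : 0 < γ)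
    (hγα : 1 < γ * α) (hC : 0 ≤ C)
    (hREG : ∀ᶠ n : ℕ in Filter.atTop, α * (k * Real.log n + c) ≤ REG n) {ε : ℝ} (hε : 0 < ε) :
    ∀ᶠ n : ℕ in Filter.atTop, C * (n : ℝ) ^ k * Real.exp (-(γ * (REG n - 1))) ≤ ε := by
  have hlim : Filter.Tendsto
      (fun n : ℕ => C * Real.exp (γ - γ * α * c) * (n : ℝ) ^ (-((γ * α - 1) * k)))
      Filter.atTop (nhds 0) := by
    have h := (tendsto_rpow_neg_atTop (mul_pos (sub_pos.2 hγα) hk)).comp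
      tendsto_natCast_atTop_atTop
    simpa only [mul_zero, Function.comp_def] using h.const_mul (C * Real.exp (γ - γ * α * c))
  filter_upwards [hlim.eventually_le_const hε, hREG, Filter.eventually_gt_atTop 0] with n hn hR hn₀
  have hn₀' : (0 : ℝ) < n := Nat.cast_pos.2 hn₀
  refine le_trans ?_ hn
  rw [mul_assoc, mul_assoc, Real.rpow_def_of_pos hn₀', Real.rpow_def_of_pos hn₀', ← Real.exp_add,
    ← Real.exp_add]
  gcongr ?_ * ?_
  exact Real.exp_le_exp.2 (by linarith [mul_le_mul_of_nonneg_left hR hγ.le])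

theorem exp_neg_mul_div_add_le {γ α b R x : ℝ} (hγ : 0 ≤ γ) (hα : 0 < α) (hγα : 1 ≤ γ * α)
    (hx : 0 < x) (hb : 0 ≤ b) :
    Real.exp (-(γ * x * (R / x + b))) ≤ Real.exp (-(γ * (R - 1))) * Real.exp (-(x * b) / α) := by
  rw [← Real.exp_add]
  refine Real.exp_le_exp.2 ?_
  have hsplit : γ * x * (R / x + b) = γ * R + γ * (x * b) := by field_simp
  have hrate : x * b / α ≤ γ * (x * b) := by
    rw [div_le_iff₀ hα]
    nlinarith [mul_nonneg hx.le hb]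
  rw [hsplit, neg_div]
  linarith

end ExponentialTails

section MinimumDescriptionLength

variable {X : Type*} [MeasurableSpace X] {μ : Measure X} {lam k C : ℝ} {n : ℕ}
  {P : Set (X → ℝ)} {p : X → ℝ} {ι : Type*} {q : ι → X → ℝ} {est : (Fin n → X) → ι}

/- The exponent `γ = (1 - lam) / lam` satisfies `γ * α > 1`, so that `exp (-(γ * REG n))` is of
smaller order than `n ^ (-k)`. -/
theorem HasSelectionCodes.eventually_card_mul_exp_le (hP : HasSelectionCodes μ lam k P) (hk : 0 < k)
    {α c : ℝ} (hlam : 0 < lam) (h₁ : lam < 1) (hα : 1 < (1 - lam) / lam * α) {REG : ℕ → ℝ}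
    (hREG : ∀ᶠ n : ℕ in Filter.atTop, α * (k * Real.log n + c) ≤ REG n) {ε : ℝ} (hε : 0 < ε) :
    ∃ C : ℝ, 0 ≤ C ∧ ∀ᶠ n : ℕ in Filter.atTop, ∃ (ι : Type) (_ : Fintype ι) (_ : Nonempty ι)
      (q : ι → X → ℝ), IsSelectionCode μ lam n C P q ∧
        Fintype.card ι * (C * Real.exp (-((1 - lam) / lam * (REG n - 1)))) ≤ ε := by
  obtain ⟨C, hC₀, hC⟩ := hP
  refine ⟨C, hC₀, ?_⟩
  filter_upwards [hC, eventually_mul_rpow_mul_exp_le hk (div_pos (sub_pos.2 h₁) hlam) hα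
    (sq_nonneg C) hREG hε] with n hcode hsmall
  obtain ⟨ι, hι, hne, q, hcard, hq⟩ := hcode
  refine ⟨ι, hι, hne, q, hq, ?_⟩
  calc _ ≤ C * (n : ℝ) ^ k * (C * Real.exp (-((1 - lam) / lam * (REG n - 1)))) := by gcongr
    _ = C ^ 2 * (n : ℝ) ^ k * Real.exp (-((1 - lam) / lam * (REG n - 1))) := by ring
    _ ≤ ε := hsmall

variable [SigmaFinite μ]

namespace IsSelectionCode

theorem setIntegral_fiber_le (hq : IsSelectionCode μ lam n C P q)
    (hest : ∀ x i, -Real.log (∏ t, q (est x) (x t)) ≤ -Real.log (∏ t, q i (x t))) (hpP : p ∈ P)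
    (hp₀ : ∀ x, 0 ≤ p x) (hp : Integrable p μ) (i : ι) :
    ∫ x in est ⁻¹' {i}, ∏ t, p (x t) ∂(Measure.pi fun _ => μ)
      ≤ C * Real.exp (-((1 - lam) / lam * n * renyiDiv μ lam p (q i))) := by
  obtain ⟨j, hj⟩ := hq.exists_competitor p hpP i
  refine le_trans (setIntegral_mono_set
    (Integrable.fintype_prod (f := fun _ => p) fun _ => hp).integrableOn
    (ae_of_all _ fun x => Finset.prod_nonneg fun t _ => hp₀ _) ?_) hj
  refine (show est ⁻¹' {i} ⊆ _ from fun x hx => ?_).eventuallyLE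
  rw [Set.mem_preimage, Set.mem_singleton_iff] at hx
  exact hx ▸ hest x j

variable [Fintype ι]

theorem integral_mul_renyiDiv_le (hq : IsSelectionCode μ lam n C P q) (hlam : 0 < lam)
    (h₁ : lam < 1) (hn : 0 < n) (hmeas : ∀ i, MeasurableSet (est ⁻¹' {i}))
    (hest : ∀ x i, -Real.log (∏ t, q (est x) (x t)) ≤ -Real.log (∏ t, q i (x t))) (hpP : p ∈ P)
    (hp₀ : ∀ x, 0 ≤ p x) (hp : ∫ x, p x ∂μ = 1) (s : ℝ) :
    ∫ x, (∏ t, p (x t)) * renyiDiv μ lam p (q (est x)) ∂(Measure.pi fun _ => μ)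
      ≤ s + Fintype.card ι
        * (C * Real.exp (-((1 - lam) / lam * n * s)) / ((1 - lam) / lam * n)) := by
  have hpi := integrable_of_integral_eq_one hp
  have hg := Integrable.fintype_prod (f := fun _ : Fin n => p) fun _ => hpi
  have hone : ∑ i, ∫ x in est ⁻¹' {i}, ∏ t, p (x t) ∂(Measure.pi fun _ => μ) = 1 := by
    rw [← setIntegral_preimage_eq_sum hg hmeas, Finset.coe_univ, Set.preimage_univ,
      setIntegral_univ, integral_fintype_prod_eq_prod (f := fun _ => p), hp, Finset.prod_const_one]
  rw [integral_mul_comp_eq_sum hg hmeas fun i => renyiDiv μ lam p (q i)]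
  exact sum_mul_le_of_le_exp
    (mul_pos (div_pos (sub_pos.2 h₁) hlam) (Nat.cast_pos.2 hn))
    (fun i => integral_nonneg fun x => Finset.prod_nonneg fun t _ => hp₀ _) hone
    (hq.setIntegral_fiber_le hest hpP hp₀ hpi) s

theorem setIntegral_lt_renyiDiv_le [Nonempty ι] (hq : IsSelectionCode μ lam n C P q)
    (hlam : 0 < lam) (h₁ : lam < 1) (hmeas : ∀ i, MeasurableSet (est ⁻¹' {i}))
    (hest : ∀ x i, -Real.log (∏ t, q (est x) (x t)) ≤ -Real.log (∏ t, q i (x t))) (hpP : p ∈ P)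
    (hp₀ : ∀ x, 0 ≤ p x) (hp : Integrable p μ) (t : ℝ) :
    ∫ x in {x | t < renyiDiv μ lam p (q (est x))}, ∏ t, p (x t) ∂(Measure.pi fun _ => μ)
      ≤ Fintype.card ι * (C * Real.exp (-((1 - lam) / lam * n * t))) := by
  have hset : {x | t < renyiDiv μ lam p (q (est x))}
      = est ⁻¹' ↑({i | t < renyiDiv μ lam p (q i)} : Finset ι) := by
    ext x
    simp only [Set.mem_ofPred_eq, Finset.coe_filter, Finset.mem_univ, true_and, Set.mem_preimage]
  rw [hset, setIntegral_preimage_eq_sum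
    (Integrable.fintype_prod (f := fun _ : Fin n => p) fun _ => hp) hmeas]
  exact sum_filter_lt_le_of_le_exp
    (mul_nonneg (div_pos (sub_pos.2 h₁) hlam).le n.cast_nonneg)
    (fun i => integral_nonneg fun x => Finset.prod_nonneg fun t _ => hp₀ _)
    (hq.setIntegral_fiber_le hest hpP hp₀ hp) t

end IsSelectionCode

/- With the constant code length `log m` on `m` codewords, the MDL estimator is the maximum
likelihood estimator over the codewords. -/
theorem HasSelectionCodes.exists_two_part_code (hP : HasSelectionCodes μ lam k P)
    (hp₀ : ∀ p ∈ P, ∀ x, 0 ≤ p x) (hp : ∀ p ∈ P, ∫ x, p x ∂μ = 1) (hk : 0 < k) {α c : ℝ}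
    (hα : 0 < α) (hlam : 0 < lam) (hlamα : lam * (1 + α) < α) {REG : ℕ → ℝ}
    (hREG : ∀ᶠ n : ℕ in Filter.atTop, α * (k * Real.log n + c) ≤ REG n) :
    ∃ N : ℕ, ∀ n : ℕ, N ≤ n →
      ∃ (ι : Type) (_ : Countable ι) (q : ι → X → ℝ) (L : ι → ℝ) (est : (Fin n → X) → ι),
        (∀ i x, 0 ≤ q i x) ∧ (∀ i, Measurable (q i)) ∧ (∀ i, ∫ x, q i x ∂μ = 1) ∧
        (∀ i, 0 ≤ L i) ∧ (∑' i, Real.exp (-L i)) ≤ 1 ∧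
        (∀ (x : Fin n → X) (i : ι), -Real.log (∏ t, q (est x) (x t)) + α * L (est x)
          ≤ -Real.log (∏ t, q i (x t)) + α * L i) ∧
        ∀ p ∈ P,
          (∫ x, (∏ t, p (x t)) * renyiDiv μ lam p (q (est x)) ∂(Measure.pi fun _ : Fin n => μ))
            ≤ REG n / n ∧
          ∀ b : ℝ, 0 < b →
            (∫ x in {x : Fin n → X | REG n / n + b < renyiDiv μ lam p (q (est x))},
              (∏ t, p (x t)) ∂(Measure.pi fun _ : Fin n => μ)) < Real.exp (-(n * b) / α) := by
  have h₁ : lam < 1 := by nlinarith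
  have hγ : 0 < (1 - lam) / lam := div_pos (sub_pos.2 h₁) hlam
  have hγα : 1 < (1 - lam) / lam * α := by
    rw [div_mul_eq_mul_div, one_lt_div hlam]
    linarith
  obtain ⟨C, hC₀, hC⟩ := hP.eventually_card_mul_exp_le hk hlam h₁ hγα hREG (lt_min hγ one_half_pos)
  refine Filter.eventually_atTop.1 ?_
  filter_upwards [hC, Filter.eventually_gt_atTop 0] with n ⟨ι, _, _, q, hq, hbound⟩ hn
  have hn₀ : (0 : ℝ) < n := Nat.cast_pos.2 hn
  obtain ⟨est, hmeas, hest⟩ := exists_measurable_argmin fun i =>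
    (Real.measurable_log.comp (Finset.measurable_fun_prod Finset.univ fun (t : Fin n) _ =>
      (hq.measurable i).comp (measurable_pi_apply t))).neg
  refine ⟨ι, inferInstance, q, fun _ => Real.log (Fintype.card ι), est, hq.nonneg, hq.measurable,
    hq.integral_eq_one, fun _ => Real.log_natCast_nonneg _, ?_,
    fun x i => add_le_add_left (hest x i) _, fun p hpP => ⟨?_, fun b hb => ?_⟩⟩
  · rw [tsum_fintype, Finset.sum_const, Finset.card_univ, nsmul_eq_mul, Real.exp_neg,
      Real.exp_log (Nat.cast_pos.2 Fintype.card_pos),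
      mul_inv_cancel₀ (Nat.cast_ne_zero.2 Fintype.card_ne_zero)]
  · refine (hq.integral_mul_renyiDiv_le hlam h₁ hn hmeas hest hpP (hp₀ p hpP) (hp p hpP)
      ((REG n - 1) / n)).trans ?_
    set γ := (1 - lam) / lam
    rw [mul_assoc, mul_div_cancel₀ _ hn₀.ne', ← mul_div_assoc]
    calc _ ≤ (REG n - 1) / n + γ / (γ * n) := by gcongr; exact hbound.trans (min_le_left _ _)
      _ = REG n / n := by field_simp; ring
  · refine (hq.setIntegral_lt_renyiDiv_le hlam h₁ hmeas hest hpP (hp₀ p hpP)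
      (integrable_of_integral_eq_one (hp p hpP)) (REG n / n + b)).trans_lt ?_
    have hexp := exp_neg_mul_div_add_le (R := REG n) hγ.le hα hγα.le hn₀ hb.le
    set γ := (1 - lam) / lam
    calc _ ≤ Fintype.card ι * (C * (Real.exp (-(γ * (REG n - 1))) * Real.exp (-(n * b) / α))) := by
          gcongr
      _ = Fintype.card ι * (C * Real.exp (-(γ * (REG n - 1)))) * Real.exp (-(n * b) / α) := by ring
      _ ≤ 1 / 2 * Real.exp (-(n * b) / α) := by gcongr; exact hbound.trans (min_le_right _ _)
      _ < _ := by linarith [Real.exp_pos (-(n * b) / α)]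

end MinimumDescriptionLength

theorem ae_eq_of_le_of_tendsto {X : Type*} [MeasurableSpace X] {μ : Measure X} {f g : X → ℝ}
    {q : ℕ → X → ℝ} (hf : Integrable f μ) (hfg : ∀ x, f x ≤ g x)
    (hq₀ : ∀ k x, 0 ≤ q k x) (hq : ∀ k, Integrable (q k) μ) (hqf : ∀ k, ∫ x, q k x ∂μ ≤ ∫ x, f x ∂μ)
    (hlim : ∀ x, Filter.Tendsto (fun k => q k x) Filter.atTop (nhds (g x))) : f =ᵐ[μ] g := by
  have hg₀ : ∀ x, 0 ≤ g x := fun x => ge_of_tendsto' (hlim x) fun k => hq₀ k x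
  have hf₀ : 0 ≤ ∫ x, f x ∂μ := (integral_nonneg (hq₀ 0)).trans (hqf 0)
  have hfatou : ∫⁻ x, ENNReal.ofReal (g x) ∂μ ≤ ENNReal.ofReal (∫ x, f x ∂μ) :=
    calc ∫⁻ x, ENNReal.ofReal (g x) ∂μ
        = ∫⁻ x, Filter.liminf (fun k => ENNReal.ofReal (q k x)) Filter.atTop ∂μ :=
          lintegral_congr fun x => (ENNReal.tendsto_ofReal (hlim x)).liminf_eq.symm
      _ ≤ Filter.liminf (fun k => ∫⁻ x, ENNReal.ofReal (q k x) ∂μ) Filter.atTop :=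
          lintegral_liminf_le' fun k => (hq k).aemeasurable.ennreal_ofReal
      _ ≤ ENNReal.ofReal (∫ x, f x ∂μ) :=
          Filter.liminf_le_of_le (by isBoundedDefault) fun b hb => by
            obtain ⟨k, hk⟩ := hb.exists
            rw [← ofReal_integral_eq_lintegral_ofReal (hq k) (ae_of_all _ (hq₀ k))] at hk
            exact hk.trans (ENNReal.ofReal_le_ofReal (hqf k))
  have hg : Integrable g μ := by
    refine ⟨aestronglyMeasurable_of_tendsto_ae Filter.atTop
      (fun k => (hq k).aestronglyMeasurable) (ae_of_all _ hlim), ?_⟩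
    rw [hasFiniteIntegral_iff_ofReal (ae_of_all _ hg₀)]
    exact hfatou.trans_lt ENNReal.ofReal_lt_top
  have hgf : ∫ x, g x ∂μ ≤ ∫ x, f x ∂μ := by
    rwa [← ofReal_integral_eq_lintegral_ofReal hg (ae_of_all _ hg₀),
      ENNReal.ofReal_le_ofReal_iff hf₀] at hfatou
  have hzero : (fun x => g x - f x) =ᵐ[μ] 0 := by
    refine (integral_eq_zero_iff_of_nonneg (fun x => sub_nonneg.2 (hfg x)) (hg.sub hf)).1 ?_
    rw [integral_sub hg hf, le_antisymm hgf (integral_mono hf hg hfg), sub_self]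
  exact hzero.mono fun x hx => (sub_eq_zero.1 hx).symm

section DeterministicInformation

variable {X : Type*} [MeasurableSpace X] {μ : Measure X} {ι : Type*} [Fintype ι] [DecidableEq ι]
  {Θ : Set (ι → ℝ)} {p : (ι → ℝ) → X → ℝ} {J : (ι → ℝ) → Matrix ι ι ℝ}

/-- A family of probability densities over a convex parameter set whose empirical Fisher information
is a positive definite matrix `J θ` common to all observations. The densities may vanish: as
`Real.log 0 = 0`, the conditions on the log-likelihood are also imposed where it is a junk value. -/
structure HasDeterministicInformation (μ : Measure X) (Θ : Set (ι → ℝ)) (p : (ι → ℝ) → X → ℝ)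
    (J : (ι → ℝ) → Matrix ι ι ℝ) : Prop where
  convex : Convex ℝ Θ
  nonneg : ∀ θ ∈ Θ, ∀ x, 0 ≤ p θ x
  measurable : ∀ θ ∈ Θ, Measurable (p θ)
  integral_eq_one : ∀ θ ∈ Θ, ∫ x, p θ x ∂μ = 1
  contDiffOn_log : ∀ x, ContDiffOn ℝ 1 (fun θ => Real.log (p θ x)) Θ
  negHessian_log : ∀ θ ∈ Θ, ∀ x, negHessian (fun θ => Real.log (p θ x)) θ = J θ
  information_pos : ∀ θ ∈ Θ, ∀ u : ι → ℝ, u ≠ 0 → 0 < u ⬝ᵥ (J θ).mulVec u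

namespace HasDeterministicInformation

theorem hasSecondDerivOnUnit_log (hM : HasDeterministicInformation μ Θ p J) {w v : ι → ℝ}
    (hw : w ∈ Θ) (hv : v ∈ Θ) (x : X) :
    HasSecondDerivOnUnit (fun s => Real.log (p (w + s • (v - w)) x))
      fun s => -((v - w) ⬝ᵥ (J (w + s • (v - w))).mulVec (v - w)) := by
  have hseg : ∀ s ∈ Set.Icc (0 : ℝ) 1, w + s • (v - w) ∈ Θ := fun s hs =>
    hM.convex.add_smul_sub_mem hw hv hs
  refine (hasSecondDerivOnUnit_line (hM.contDiffOn_log x) hseg fun z hz u hu => ?_).congr_deriv2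
    fun s hs => ?_
  · rw [hM.negHessian_log z hz x]
    exact hM.information_pos z hz u hu
  · rw [hM.negHessian_log _ (hseg s (Set.Ioo_subset_Icc_self hs)) x]

theorem eventually_density_pos (hM : HasDeterministicInformation μ Θ p J) {w v : ι → ℝ}
    (hw : w ∈ Θ) (hv : v ∈ Θ) (hne : v ≠ w) (x : X) :
    ∀ᶠ s in nhdsWithin (0 : ℝ) (Set.Ioi 0), 0 < p (w + s • (v - w)) x := by
  have hseg : ∀ s ∈ Set.Ioo (0 : ℝ) 1, w + s • (v - w) ∈ Θ := fun s hs =>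
    hM.convex.add_smul_sub_mem hw hv (Set.Ioo_subset_Icc_self hs)
  have hconc := (hM.hasSecondDerivOnUnit_log hw hv x).strictConcaveOn fun s hs =>
    neg_neg_of_pos (hM.information_pos _ (hseg s hs) _ (sub_ne_zero.2 hne))
  -- A strictly concave function takes the value `0 = Real.log 0` at most twice.
  filter_upwards [eventually_ne_of_strictConcaveOn one_pos hconc 0, Ioo_mem_nhdsGT one_pos]
    with s hlog hs
  exact (hM.nonneg _ (hseg s hs) x).lt_of_ne' fun h0 => hlog (by rw [h0, Real.log_zero])

theorem ae_eq_exp_log (hM : HasDeterministicInformation μ Θ p J) (hΘ : Θ.Nontrivial)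
    {w : ι → ℝ} (hw : w ∈ Θ) : p w =ᵐ[μ] fun x => Real.exp (Real.log (p w x)) := by
  obtain ⟨v, hv, hne⟩ := hΘ.exists_ne w
  obtain ⟨s, -, hs, hs₀⟩ := exists_seq_strictAnti_tendsto' (zero_lt_one (α := ℝ))
  have hmem : ∀ k, w + s k • (v - w) ∈ Θ := fun k =>
    hM.convex.add_smul_sub_mem hw hv (Set.Ioo_subset_Icc_self (hs k))
  have hone := hM.integral_eq_one
  refine ae_eq_of_le_of_tendsto (q := fun k => p (w + s k • (v - w)))
    (integrable_of_integral_eq_one (hone w hw)) (fun x => Real.le_exp_log _)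
    (fun k => hM.nonneg _ (hmem k))
    (fun k => integrable_of_integral_eq_one (hone _ (hmem k)))
    (fun k => ((hone _ (hmem k)).trans (hone w hw).symm).le) fun x => ?_
  have hs' : Filter.Tendsto s Filter.atTop (nhdsWithin 0 (Set.Ioi 0)) :=
    tendsto_nhdsWithin_iff.2 ⟨hs₀, Filter.Eventually.of_forall fun k => (hs k).1⟩
  have hline := (hM.hasSecondDerivOnUnit_log hw hv x).continuousOn 0 ⟨le_rfl, zero_le_one⟩
  have hlog := hline.tendsto.comp (tendsto_nhdsWithin_iff.2
    ⟨hs₀, Filter.Eventually.of_forall fun k => Set.Ioo_subset_Icc_self (hs k)⟩)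
  simp only [zero_smul, add_zero, Function.comp_def] at hlog
  exact hlog.rexp.congr' ((hs'.eventually (hM.eventually_density_pos hw hv hne x)).mono
    fun k hk => Real.exp_log hk)

theorem isPosDensity_exp_log (hM : HasDeterministicInformation μ Θ p J) (hΘ : Θ.Nontrivial)
    {w : ι → ℝ} (hw : w ∈ Θ) : IsPosDensity μ fun x => Real.exp (Real.log (p w x)) where
  measurable := (hM.measurable w hw).log.exp
  pos _ := Real.exp_pos _
  integral_eq_one := (integral_congr_ae (hM.ae_eq_exp_log hΘ hw)).symm.trans
    (hM.integral_eq_one w hw)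

theorem log_sub_log_eq_fderivWithin (hM : HasDeterministicInformation μ Θ p J) {θ₀ θ : ι → ℝ}
    (hθ₀ : θ₀ ∈ Θ) (hθ : θ ∈ Θ) (x₀ x : X) :
    (Real.log (p θ x) - Real.log (p θ x₀)) - (Real.log (p θ₀ x) - Real.log (p θ₀ x₀))
      = fderivWithin ℝ (fun θ => Real.log (p θ x) - Real.log (p θ x₀)) Θ θ₀ (θ - θ₀) := by
  refine sub_eq_fderivWithin_of_affine (g := fun θ => Real.log (p θ x) - Real.log (p θ x₀))
    hM.convex hθ₀ hθ ?_ fun s hs => ?_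
  · exact (((hM.contDiffOn_log x).sub (hM.contDiffOn_log x₀)).differentiableOn one_ne_zero) θ₀ hθ₀
  · -- The second derivatives cancel because `J` does not depend on the observation.
    have haff := ((hM.hasSecondDerivOnUnit_log hθ₀ hθ x).sub
      (hM.hasSecondDerivOnUnit_log hθ₀ hθ x₀)).congr_deriv2 (f₂ := fun _ => 0)
      fun _ _ => sub_self _
    simpa only [zero_smul, add_zero, one_smul, add_sub_cancel] using haff.eq_affine hs

theorem exists_exp_log_eq_expDensity (hM : HasDeterministicInformation μ Θ p J) (x₀ : X) :
    ∃ (T : X → (ι → ℝ) →ₗ[ℝ] ℝ) (h : X → ℝ), ∀ θ ∈ Θ,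
      (fun x => Real.exp (Real.log (p θ x)))
        = expDensity T h (fun θ => -Real.log (p θ x₀)) θ := by
  rcases Θ.eq_empty_or_nonempty with rfl | ⟨θ₀, hθ₀⟩
  · exact ⟨0, 0, fun _ h => h.elim⟩
  set T : X → (ι → ℝ) →ₗ[ℝ] ℝ := fun x =>
    fderivWithin ℝ (fun θ => Real.log (p θ x) - Real.log (p θ x₀)) Θ θ₀
  refine ⟨T, fun x => Real.log (p θ₀ x) - Real.log (p θ₀ x₀) - T x θ₀, fun θ hθ => ?_⟩
  funext x
  have hlin : (Real.log (p θ x) - Real.log (p θ x₀)) - (Real.log (p θ₀ x) - Real.log (p θ₀ x₀))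
      = T x θ - T x θ₀ :=
    (hM.log_sub_log_eq_fderivWithin hθ₀ hθ x₀ x).trans (map_sub (T x) θ θ₀)
  rw [expDensity]
  congr 1
  linarith

theorem exists_second_difference_le (hM : HasDeterministicInformation μ Θ p J)
    (hΘ : IsCompact Θ) {C : ℝ} (hJ : ∀ θ ∈ Θ, ∀ u : ι → ℝ, u ⬝ᵥ (J θ).mulVec u ≤ C * (u ⬝ᵥ u))
    (x₀ : X) :
    ∃ C' : ℝ, ∀ w ∈ Θ, ∀ v ∈ Θ, ∀ s : ℝ, 0 ≤ s → 2 * s ≤ 1 →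
      -Real.log (p (w + (2 * s) • (v - w)) x₀) - 2 * -Real.log (p (w + s • (v - w)) x₀)
        + -Real.log (p w x₀) ≤ C' * s ^ 2 := by
  have hcont : Continuous fun z : (ι → ℝ) × (ι → ℝ) => C * ((z.2 - z.1) ⬝ᵥ (z.2 - z.1)) := by
    unfold dotProduct; fun_prop
  obtain ⟨C', hC'⟩ := (hΘ.prod hΘ).exists_bound_of_continuousOn hcont.continuousOn
  refine ⟨C', fun w hw v hv s hs₀ hs₁ => ?_⟩
  have hneg := (HasSecondDerivOnUnit.const_mul_sq 0).sub (hM.hasSecondDerivOnUnit_log hw hv x₀)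
  have hle := hneg.second_difference_le (C := C') (fun t ht => ?_) ⟨hs₀, by linarith⟩
  · simp only [zero_div, zero_mul, zero_sub, zero_smul, add_zero] at hle
    exact hle
  · rw [zero_sub, neg_neg]
    exact (hJ _ (hM.convex.add_smul_sub_mem hw hv (Set.Ioo_subset_Icc_self ht)) _).trans
      ((le_abs_self _).trans (hC' (w, v) ⟨hw, hv⟩))

theorem exists_isRegularExpFamily (hM : HasDeterministicInformation μ Θ p J) (hΘ : IsCompact Θ)
    (hΘ' : Θ.Nontrivial) {C : ℝ}
    (hJ : ∀ θ ∈ Θ, ∀ u : ι → ℝ, u ⬝ᵥ (J θ).mulVec u ≤ C * (u ⬝ᵥ u)) :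
    ∃ (T : X → (ι → ℝ) →ₗ[ℝ] ℝ) (h : X → ℝ) (ψ : (ι → ℝ) → ℝ), IsRegularExpFamily μ Θ T h ψ ∧
      ∀ θ ∈ Θ, p θ =ᵐ[μ] expDensity T h ψ θ := by
  obtain ⟨x₀⟩ : Nonempty X := by
    obtain ⟨θ, hθ⟩ := hΘ'.nonempty
    by_contra hX
    have := not_nonempty_iff.1 hX
    simpa [integral_of_isEmpty] using hM.integral_eq_one θ hθ
  obtain ⟨T, h, hexp⟩ := hM.exists_exp_log_eq_expDensity x₀
  refine ⟨T, h, fun θ => -Real.log (p θ x₀), ⟨hM.convex, hΘ, fun θ hθ => ?_, ?_,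
    hM.exists_second_difference_le hΘ hJ x₀⟩, fun θ hθ => ?_⟩
  · exact hexp θ hθ ▸ hM.isPosDensity_exp_log hΘ' hθ
  · exact LocallyLipschitzOn.exists_lipschitzOnWith_of_compact hΘ
      ((hM.contDiffOn_log x₀).neg.locallyLipschitzOn hM.convex)
  · exact hexp θ hθ ▸ hM.ae_eq_exp_log hΘ' hθ

end HasDeterministicInformation

theorem HasDeterministicInformation.hasSelectionCodes [SigmaFinite μ] {ι : Type} [Fintype ι]
    [DecidableEq ι] {Θ : Set (ι → ℝ)} {p : (ι → ℝ) → X → ℝ} {J : (ι → ℝ) → Matrix ι ι ℝ}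
    (hM : HasDeterministicInformation μ Θ p J) (hΘ : IsCompact Θ) (hΘ' : Θ.Nonempty) {C : ℝ}
    (hJ : ∀ θ ∈ Θ, ∀ u : ι → ℝ, u ⬝ᵥ (J θ).mulVec u ≤ C * (u ⬝ᵥ u)) {lam : ℝ} (hlam : 0 < lam)
    (h₁ : lam < 1) : HasSelectionCodes μ lam (Fintype.card ι / 2) (p '' Θ) := by
  rcases Set.subsingleton_or_nontrivial Θ with hsub | hnt
  · obtain ⟨θ₀, rfl⟩ := hsub.eq_empty_or_singleton.resolve_left hΘ'.ne_empty
    have hθ₀ : θ₀ ∈ ({θ₀} : Set (ι → ℝ)) := rfl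
    rw [Set.image_singleton]
    exact hasSelectionCodes_singleton (by positivity) (hM.nonneg θ₀ hθ₀) (hM.measurable θ₀ hθ₀)
      (hM.integral_eq_one θ₀ hθ₀)
  · obtain ⟨T, h, ψ, hF, hae⟩ := hM.exists_isRegularExpFamily hΘ hnt hJ
    refine (hF.hasSelectionCodes hΘ' hlam h₁).of_ae_eq ?_
    rintro _ ⟨θ, hθ, rfl⟩
    exact ⟨_, ⟨θ, hθ, rfl⟩, hae θ hθ⟩

end DeterministicInformation

section EuclNorm

variable {K : ℕ}

theorem euclNorm_sq (v : Fin K → ℝ) : euclNorm v ^ 2 = v ⬝ᵥ v := by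
  rw [euclNorm, Real.sq_sqrt (Finset.sum_nonneg fun _ _ => sq_nonneg _)]
  exact Finset.sum_congr rfl fun i _ => sq (v i)

theorem exists_euclNorm_eq_one_eq_smul {v : Fin K → ℝ} (hv : v ≠ 0) :
    0 < euclNorm v ∧ ∃ z, euclNorm z = 1 ∧ v = euclNorm v • z := by
  have hpos : 0 < euclNorm v := lt_of_pow_lt_pow_left₀ 2 (Real.sqrt_nonneg _) <| by
    simpa [euclNorm_sq] using dotProduct_self_star_pos_iff.2 hv
  refine ⟨hpos, (euclNorm v)⁻¹ • v, ?_, (smul_inv_smul₀ hpos.ne' v).symm⟩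
  refine (sq_eq_sq₀ (Real.sqrt_nonneg _) zero_le_one).1 ?_
  rw [← euclNorm, euclNorm_sq, smul_dotProduct, dotProduct_smul, ← euclNorm_sq, smul_eq_mul,
    smul_eq_mul]
  field_simp

theorem smul_dotProduct_mulVec_smul (A : Matrix (Fin K) (Fin K) ℝ) (c : ℝ) (z : Fin K → ℝ) :
    (c • z) ⬝ᵥ A.mulVec (c • z) = c ^ 2 * (z ⬝ᵥ A.mulVec z) := by
  rw [Matrix.mulVec_smul, dotProduct_smul, smul_dotProduct, smul_eq_mul, smul_eq_mul, sq, mul_assoc]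

theorem dotProduct_mulVec_pos_of_euclNorm_eq_one {A : Matrix (Fin K) (Fin K) ℝ}
    (hA : ∀ z, euclNorm z = 1 → 0 < z ⬝ᵥ A.mulVec z) {v : Fin K → ℝ} (hv : v ≠ 0) :
    0 < v ⬝ᵥ A.mulVec v := by
  obtain ⟨hpos, z, hz, hvz⟩ := exists_euclNorm_eq_one_eq_smul hv
  rw [hvz, smul_dotProduct_mulVec_smul]
  exact mul_pos (pow_pos hpos 2) (hA z hz)

theorem dotProduct_mulVec_le_of_euclNorm_eq_one {A : Matrix (Fin K) (Fin K) ℝ} {C : ℝ}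
    (hA : ∀ z, euclNorm z = 1 → z ⬝ᵥ A.mulVec z ≤ C) (v : Fin K → ℝ) :
    v ⬝ᵥ A.mulVec v ≤ C * (v ⬝ᵥ v) := by
  rcases eq_or_ne v 0 with rfl | hv
  · simp
  obtain ⟨-, z, hz, hvz⟩ := exists_euclNorm_eq_one_eq_smul hv
  calc v ⬝ᵥ A.mulVec v = euclNorm v ^ 2 * (z ⬝ᵥ A.mulVec z) := by
        rw [← smul_dotProduct_mulVec_smul, ← hvz]
    _ ≤ euclNorm v ^ 2 * C := mul_le_mul_of_nonneg_left (hA z hz) (sq_nonneg _)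
    _ = C * (v ⬝ᵥ v) := by rw [euclNorm_sq, mul_comm]

end EuclNorm

theorem mul_log_add_le_regret (K n : ℕ) {α κ a ζ : ℝ} (hα : 0 ≤ α) (hκ : 0 ≤ κ) (ha : 0 ≤ a)
    (hζ : 0 ≤ ζ) (I iot : ℝ) :
    α * ((K / 2) * Real.log n + (I - K * Real.log a))
      ≤ α * ((K / 2) * Real.log n + I
        + (((1 + κ * Real.sqrt K * a * (n : ℝ) ^ (-(1 / 4 : ℝ))) *
              (1 + κ * Real.sqrt K * a * (n : ℝ) ^ (-(1 / 2 : ℝ)) *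
                ζ ^ (-(1 / 2 : ℝ)) / 2)) * K * a ^ 2 / (8 * α)
          - K * Real.log a
          + (Real.log (1 + 1 * (n : ℝ) ^ (-(1 / 4 : ℝ)))
            + Real.log (1 + 1 * (n : ℝ) ^ (-(1 / 4 : ℝ)))
            + Real.log (1 + 1 * (n : ℝ) ^ (-(1 / 4 : ℝ)))))
        + (n : ℝ) ^ (-iot)) := by
  have hquant : 0 ≤ ((1 + κ * Real.sqrt K * a * (n : ℝ) ^ (-(1 / 4 : ℝ))) *
      (1 + κ * Real.sqrt K * a * (n : ℝ) ^ (-(1 / 2 : ℝ)) *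
        ζ ^ (-(1 / 2 : ℝ)) / 2)) * K * a ^ 2 / (8 * α) := by positivity
  have hlog : 0 ≤ Real.log (1 + 1 * (n : ℝ) ^ (-(1 / 4 : ℝ))) :=
    Real.log_nonneg (le_add_of_nonneg_right (by positivity))
  have hpow : 0 ≤ (n : ℝ) ^ (-iot) := by positivity
  exact mul_le_mul_of_nonneg_left (by linarith) hα

theorem mul_one_add_lt_of_le_one_sub_inv {α lam : ℝ} (hα : 1 < α) (hlam : lam ≤ 1 - α⁻¹) :
    lam * (1 + α) < α := by
  have hα₀ : 0 < α := one_pos.trans hα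
  have hlam₁ : lam < 1 := by linarith [inv_pos.2 hα₀]
  have hmul : lam * α ≤ α - 1 := by
    simpa [sub_mul, hα₀.ne'] using mul_le_mul_of_nonneg_right hlam hα₀.le
  linarith

theorem stmt6_general {K : ℕ} (hK : 0 < K) {X : Type*} [MeasurableSpace X] {μ : Measure X}
    [SigmaFinite μ] {Θ : Set (Fin K → ℝ)} (hΘc : IsCompact Θ) (hΘconv : Convex ℝ Θ)
    (hΘne : Θ.Nonempty) {p : (Fin K → ℝ) → X → ℝ}
    (hp₀ : ∀ θ ∈ Θ, ∀ x, 0 ≤ p θ x) (hpm : ∀ θ ∈ Θ, Measurable (p θ))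
    (hp : ∀ θ ∈ Θ, ∫ x, p θ x ∂μ = 1) (hlog : ∀ x, ContDiffOn ℝ 1 (fun θ => Real.log (p θ x)) Θ)
    {J : (Fin K → ℝ) → Matrix (Fin K) (Fin K) ℝ} (hJ : ∀ θ ∈ Θ, ∀ x, Jhat1 p θ x = J θ)
    (hJ_pos : ∀ θ ∈ Θ, ∀ z, euclNorm z = 1 → 0 < z ⬝ᵥ (J θ).mulVec z) {C : ℝ}
    (hJ_le : ∀ θ ∈ Θ, ∀ z, euclNorm z = 1 → z ⬝ᵥ (J θ).mulVec z ≤ C) {α lam c : ℝ} (hα : 0 < α)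
    (hlam : 0 < lam) (hlamα : lam * (1 + α) < α) {REG : ℕ → ℝ}
    (hREG : ∀ᶠ n : ℕ in Filter.atTop, α * (K / 2 * Real.log n + c) ≤ REG n) :
    ∃ N : ℕ, ∀ n : ℕ, N ≤ n →
      ∃ (ι : Type) (_ : Countable ι) (q : ι → X → ℝ) (L : ι → ℝ) (est : (Fin n → X) → ι),
        (∀ i x, 0 ≤ q i x) ∧ (∀ i, Measurable (q i)) ∧ (∀ i, ∫ x, q i x ∂μ = 1) ∧
        (∀ i, 0 ≤ L i) ∧ (∑' i, Real.exp (-L i)) ≤ 1 ∧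
        (∀ (x : Fin n → X) (i : ι), -Real.log (∏ t, q (est x) (x t)) + α * L (est x)
          ≤ -Real.log (∏ t, q i (x t)) + α * L i) ∧
        ∀ θ ∈ Θ,
          (∫ x, (∏ t, p θ (x t)) * renyiDiv μ lam (p θ) (q (est x))
              ∂(Measure.pi fun _ : Fin n => μ)) ≤ REG n / n ∧
          ∀ b : ℝ, 0 < b →
            (∫ x in {x : Fin n → X | REG n / n + b < renyiDiv μ lam (p θ) (q (est x))},
              (∏ t, p θ (x t)) ∂(Measure.pi fun _ : Fin n => μ)) < Real.exp (-(n * b) / α) := by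
  have hM : HasDeterministicInformation μ Θ p J := ⟨hΘconv, hp₀, hpm, hp, hlog, hJ,
    fun θ hθ _ hu => dotProduct_mulVec_pos_of_euclNorm_eq_one (hJ_pos θ hθ) hu⟩
  have hcodes : HasSelectionCodes μ lam (K / 2) (p '' Θ) := by
    simpa using hM.hasSelectionCodes hΘc hΘne
      (fun θ hθ => dotProduct_mulVec_le_of_euclNorm_eq_one (hJ_le θ hθ)) hlam (by nlinarith)
  simpa only [Set.forall_mem_image] using
    hcodes.exists_two_part_code (Set.forall_mem_image.2 hp₀) (Set.forall_mem_image.2 hp)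
      (by positivity) hα hlam hlamα hREG

/-- **Corollary 1 (risk and loss bounds for exponential families).**
Let `M` be an exponential family (`Ĵ(θ;x) = J(θ)` identically) satisfying (A1)–(A6)
with boundary exponent `d > 0`, let `α > 1`, `lam ∈ (0, 1−α⁻¹]`, `a > 0` and
`0 < 2ι < d`, and let `REḠ = α((K/2)log n + log ∫_Θ (det J)^{1/2} + f(n) + n^{−ι})`.
Then there is a (combined) two-part code whose MDL estimator satisfies, for every
`p* ∈ M` and all large `n`, `E[d̄_lam(p*‖p̈)] ≤ REḠ/n` and
`Pr{d̄_lam(p*‖p̈) > REḠ/n + b} < e^{−nb/α}` for every `b > 0`. -/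
theorem stmt6 {K : ℕ} (hK : 0 < K) {X : Type*} [MeasurableSpace X]
    (μ : Measure X) [SigmaFinite μ]
    (Θ : Set (Fin K → ℝ)) (hΘc : IsCompact Θ) (hΘconv : Convex ℝ Θ) (hΘne : Θ.Nonempty)
    (p : (Fin K → ℝ) → X → ℝ)
    (hp_nonneg : ∀ θ ∈ Θ, ∀ x, 0 ≤ p θ x) (hp_meas : ∀ θ ∈ Θ, Measurable (p θ))
    (hp_prob : ∀ θ ∈ Θ, ∫ x, p θ x ∂μ = 1)
    (hA1 : ∀ x : X, ContDiffOn ℝ 3 (fun θ => Real.log (p θ x)) Θ)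
    (ζ lamBar : ℝ) (hζ : 0 < ζ) (hlamBar : 0 < lamBar)
    (hA2 : ∀ θ ∈ Θ, ∀ z : Fin K → ℝ, euclNorm z = 1 →
      ζ ≤ z ⬝ᵥ (FisherJ μ p θ).mulVec z ∧ z ⬝ᵥ (FisherJ μ p θ).mulVec z ≤ lamBar)
    (hA3 : ∀ θ ∈ Θ, DifferentiableAt ℝ (fun θ' => (FisherJ μ p θ').det) θ)
    (DJ : ℝ) (hDJ : 0 < DJ)
    (hA4 : ∀ θ ∈ Θ, ∀ z : Fin K → ℝ, euclNorm z = 1 →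
      |fderiv ℝ (fun θ' => Real.sqrt (FisherJ μ p θ').det) θ z| ≤ DJ)
    (κ bbar : ℝ) (hκ : 0 < κ) (hbbar : 0 < bbar)
    (hA5 : ∀ θ₁ ∈ Θ, ∀ θ₂ ∈ Θ, euclNorm (θ₁ - θ₂) ≤ bbar → ∀ z : Fin K → ℝ,
      z ⬝ᵥ (FisherJ μ p θ₁).mulVec z
        ≤ (1 + κ * euclNorm (θ₁ - θ₂)) * (z ⬝ᵥ (FisherJ μ p θ₂).mulVec z))
    -- exponential-family hypothesis: empirical Fisher = Fisher
    (hexp : ∀ θ ∈ Θ, ∀ x : X, Jhat1 p θ x = FisherJ μ p θ)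
    -- maximum likelihood estimator
    (thetahat : (n : ℕ) → (Fin n → X) → (Fin K → ℝ))
    (hMLE : ∀ (n : ℕ) (xn : Fin n → X), thetahat n xn ∈ Θ ∧
      ∀ θ ∈ Θ, ∏ t, p θ (xn t) ≤ ∏ t, p (thetahat n xn) (xn t))
    (α lam a d iot : ℝ) (hα : 1 < α) (hlam : lam ∈ Set.Ioc 0 (1 - α⁻¹))
    (ha : 0 < a) (hd : 0 < d) (hiot : 0 < iot ∧ 2 * iot < d)
    -- (A6): a boundary two-part code with regret at most `α(K−d)/2·log n + o(log n)`
    (hA6 : ∃ h : ℕ → ℝ,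
      Filter.Tendsto (fun n => h n / Real.log n) Filter.atTop (nhds 0) ∧
      ∀ᶠ n : ℕ in Filter.atTop,
        ∃ (ιb : Type) (_ : Countable ιb) (qb : ιb → X → ℝ) (Lb : ιb → ℝ)
          (estb : (Fin n → X) → ιb),
          (∀ i x, 0 ≤ qb i x) ∧ (∀ i, Measurable (qb i)) ∧
          (∀ i, ∫ x, qb i x ∂μ = 1) ∧ (∀ i, 0 ≤ Lb i) ∧
          (∑' i, Real.exp (-Lb i)) ≤ 1 ∧
          (∀ (xn : Fin n → X) (i : ιb),
            -Real.log (∏ t, qb (estb xn) (xn t)) + α * Lb (estb xn)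
              ≤ -Real.log (∏ t, qb i (xn t)) + α * Lb i) ∧
          ∀ xn : Fin n → X, thetahat n xn ∈ frontier Θ →
            Real.log (∏ t, p (thetahat n xn) (xn t))
                - (Real.log (∏ t, qb (estb xn) (xn t)) - α * Lb (estb xn))
              ≤ α * (K - d) / 2 * Real.log n + h n) :
    ∃ CJ > (0 : ℝ), ∃ CΘ > (0 : ℝ), ∃ CJK > (0 : ℝ), ∃ N : ℕ, ∀ n : ℕ, N ≤ n →
      ∃ (ιc : Type) (_ : Countable ιc) (qc : ιc → X → ℝ) (Lc : ιc → ℝ)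
        (estc : (Fin n → X) → ιc),
        (∀ i x, 0 ≤ qc i x) ∧ (∀ i, Measurable (qc i)) ∧
        (∀ i, ∫ x, qc i x ∂μ = 1) ∧ (∀ i, 0 ≤ Lc i) ∧
        (∑' i, Real.exp (-Lc i)) ≤ 1 ∧
        (∀ (xn : Fin n → X) (i : ιc),
          -Real.log (∏ t, qc (estc xn) (xn t)) + α * Lc (estc xn)
            ≤ -Real.log (∏ t, qc i (xn t)) + α * Lc i) ∧
        ∀ θs ∈ Θ,
          (∫ xn, (∏ t, p θs (xn t)) * renyiDiv μ lam (p θs) (qc (estc xn))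
              ∂(Measure.pi fun _ : Fin n => μ))
            ≤ (α * ((K / 2) * Real.log n
                + Real.log (∫ θ in Θ, Real.sqrt (FisherJ μ p θ).det)
                + (((1 + κ * Real.sqrt K * a * (n : ℝ) ^ (-(1 / 4 : ℝ))) *
                      (1 + κ * Real.sqrt K * a * (n : ℝ) ^ (-(1 / 2 : ℝ)) *
                        ζ ^ (-(1 / 2 : ℝ)) / 2)) * K * a ^ 2 / (8 * α)
                  - K * Real.log a
                  + (Real.log (1 + CJ * (n : ℝ) ^ (-(1 / 4 : ℝ)))
                    + Real.log (1 + CΘ * (n : ℝ) ^ (-(1 / 4 : ℝ)))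
                    + Real.log (1 + CJK * (n : ℝ) ^ (-(1 / 4 : ℝ)))))
                + (n : ℝ) ^ (-iot))) / n
          ∧ ∀ b : ℝ, 0 < b →
            (∫ xn in {xn : Fin n → X |
                (α * ((K / 2) * Real.log n
                  + Real.log (∫ θ in Θ, Real.sqrt (FisherJ μ p θ).det)
                  + (((1 + κ * Real.sqrt K * a * (n : ℝ) ^ (-(1 / 4 : ℝ))) *
                        (1 + κ * Real.sqrt K * a * (n : ℝ) ^ (-(1 / 2 : ℝ)) *
                          ζ ^ (-(1 / 2 : ℝ)) / 2)) * K * a ^ 2 / (8 * α)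
                    - K * Real.log a
                    + (Real.log (1 + CJ * (n : ℝ) ^ (-(1 / 4 : ℝ)))
                      + Real.log (1 + CΘ * (n : ℝ) ^ (-(1 / 4 : ℝ)))
                      + Real.log (1 + CJK * (n : ℝ) ^ (-(1 / 4 : ℝ)))))
                  + (n : ℝ) ^ (-iot))) / n + b
                  < renyiDiv μ lam (p θs) (qc (estc xn))},
              (∏ t, p θs (xn t)) ∂(Measure.pi fun _ : Fin n => μ))
              < Real.exp (-(n * b) / α) :=
  ⟨1, one_pos, 1, one_pos, 1, one_pos, stmt6_general hK hΘc hΘconv hΘne hp_nonneg hp_meas hp_prob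
    (fun x => (hA1 x).of_le (by norm_num)) hexp (fun θ hθ z hz => hζ.trans_le (hA2 θ hθ z hz).1)
    (fun θ hθ z hz => (hA2 θ hθ z hz).2) (one_pos.trans hα) hlam.1
    (mul_one_add_lt_of_le_one_sub_inv hα hlam.2) (Filter.Eventually.of_forall fun n =>
      mul_log_add_le_regret K n (one_pos.trans hα).le hκ.le ha.le hζ.le _ iot)⟩
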